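/- The group W_F (defined in the context) is metabelian, and the Dehn function of its given finite presentation satisfies δ(n) ≈ 2ⁿ. -/

import Mathlib

/-!
Call a word `p` in the letters `t`, `u` balanced if its exponent sum in each `u_j` is zero. Two
conjugates `a_i ^ p`, `a_i' ^ q` by balanced words of length at most `n` commute at a cost
exponential in `n`. Starting from the commutators which are relators, one raises the exponents of
the `t_j` one at a time: conjugation of a known commutator by `u_j` replaces both entries by
products of conjugates by powers of `t_j`, and all the pairs of factors but the extreme one are
already known to commute.

Every word of length `n` is, up to a word in `t`, `u` and a conjugation that makes the exponents of
the `u_j` nonnegative, a product of exponentially many balanced conjugates, because `u_j` can be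
traded for `f_j(t_j)`. In particular words with zero exponent sums in the letters `t`, `u` commute,
so `W_F` is metabelian. If the word represents `1`, the exponents in this product sum to zero for
each `a_i` and each monomial in the `t_s`: the affine representation over the fraction ring of
`ℤ[t]`, in which `u_j` acts as `f_j(t_j)`, detects them by the linear independence of monomials.
Rearranging the product is then enough to trivialise it, which bounds the Dehn function from above.

For the lower bound, choose complex numbers with `|x_j| |y_j| = 1`, `|f_j(x_j)| |f_j(y_j)| = 1` and
`|f_j(x_j)| > 1`. They define a representation by upper triangular `3 × 3` matrices in which the
relators become central unipotent matrices and conjugation preserves the norm of the corner entry,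
so that this norm is at most linear in the area. The word `[a_1 ^ (u_1 ^ n), a_1]` has corner entry
`f_1(x_1) ^ n - f_1(y_1) ^ n`.
-/

open Function

/-- The length of the reduced word representing an element of a free group. -/
noncomputable def freeNorm {X : Type*} (w : FreeGroup X) : ℕ :=
  letI := Classical.decEq X
  w.toWord.length

/-- `w` equals a product of exactly `N` conjugates of elements of `R ∪ R⁻¹`. -/
def AreaIs {G : Type*} [Group G] (R : Set G) (w : G) (N : ℕ) : Prop :=
  ∃ r f : Fin N → G, (∀ i, r i ∈ R ∨ (r i)⁻¹ ∈ R) ∧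
    w = (List.ofFn fun i => (f i)⁻¹ * r i * f i).prod

/-- The area of `w` with respect to the relators `R` is at most `N`. -/
def AreaLe {G : Type*} [Group G] (R : Set G) (w : G) (N : ℕ) : Prop :=
  ∃ N' ≤ N, AreaIs R w N'

/-- `f ≼ g` : there is `C > 0` with `f n ≤ C * g (C * n) + C * n + C` for all `n`. -/
def Dominates (f g : ℕ → ℕ) : Prop :=
  ∃ C : ℕ, 0 < C ∧ ∀ n, f n ≤ C * g (C * n) + C * n + C

/-- `f ≈ g` : mutual domination. -/
def DehnEquiv (f g : ℕ → ℕ) : Prop := Dominates f g ∧ Dominates g f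

/-- `δ` is the Dehn function of the presentation with relator set `R`. -/
def IsDehnFunctionOf {X : Type*} (R : Set (FreeGroup X)) (δ : ℕ → ℕ) : Prop :=
  ∀ n, IsLeast {N | ∀ w ∈ Subgroup.normalClosure R, freeNorm w ≤ n → AreaLe R w N} (δ n)

/-- A group is metabelian if its derived subgroup is abelian. -/
def IsMetabelian (G : Type*) [Group G] : Prop :=
  ∀ a b : G, a ∈ commutator G → b ∈ commutator G → a * b = b * a

instance derivedSeriesNormalInst {G : Type*} [Group G] (n : ℕ) : (derivedSeries G n).Normal :=
  derivedSeries_normal G n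

/-- The free metabelian group on `X`: the free group modulo its second derived subgroup. -/
abbrev FreeMetabelian (X : Type*) := FreeGroup X ⧸ derivedSeries (FreeGroup X) 2

/-- The word length of `w` in the free metabelian group is at most `n`. -/
def mNormLe {X : Type*} (w : FreeMetabelian X) (n : ℕ) : Prop :=
  ∃ v : FreeGroup X, QuotientGroup.mk' (derivedSeries (FreeGroup X) 2) v = w ∧ freeNorm v ≤ n

/-- `δ` is the relative Dehn function (in the variety of metabelian groups) of the
relative presentation with relator set `R`. -/
def IsRelDehnFunctionOf {X : Type*} (R : Set (FreeMetabelian X)) (δ : ℕ → ℕ) : Prop :=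
  ∀ n, IsLeast {N | ∀ w ∈ Subgroup.normalClosure R, mNormLe w n → AreaLe R w N} (δ n)

/-- The paper's commutator convention: `[x, y] = x⁻¹ * y⁻¹ * x * y`. -/
def pcomm {G : Type*} [Group G] (x y : G) : G := x⁻¹ * y⁻¹ * x * y

/-- A group has torsion-free rank `k` if it has a finite-index subgroup isomorphic to `ℤ^k`. -/
def HasTFRank (Q : Type*) [Group Q] (k : ℕ) : Prop :=
  ∃ H : Subgroup Q, H.index ≠ 0 ∧ Nonempty (H ≃* Multiplicative (Fin k → ℤ))

/-- `G ⧸ A` is abelian and has torsion-free rank `j`. -/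
def QuotientRankProp {G : Type*} [Group G] (A : Subgroup G) [A.Normal] (j : ℕ) : Prop :=
  (∀ x y : G ⧸ A, x * y = y * x) ∧ HasTFRank (G ⧸ A) j

/-- The set of torsion-free ranks of quotients `G ⧸ A` by abelian normal subgroups `A`
with `G ⧸ A` abelian. -/
def abelianRankSet (G : Type*) [Group G] : Set ℕ :=
  {j | ∃ A : Subgroup G, ∃ h : A.Normal, (∀ x y : G, x ∈ A → y ∈ A → x * y = y * x) ∧
    @QuotientRankProp G _ A h j}

namespace WF

variable (r l k : ℕ)

/-- Generator `aᵢ` of `W_F`. -/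
def ga (i : Fin r) : FreeGroup (Fin r ⊕ Fin l ⊕ Fin k) := FreeGroup.of (Sum.inl i)

/-- Generator `tᵢ` of `W_F`. -/
def gt (i : Fin l) : FreeGroup (Fin r ⊕ Fin l ⊕ Fin k) := FreeGroup.of (Sum.inr (Sum.inl i))

/-- Generator `uᵢ` of `W_F`. -/
def gu (i : Fin k) : FreeGroup (Fin r ⊕ Fin l ⊕ Fin k) := FreeGroup.of (Sum.inr (Sum.inr i))

/-- The word `t₁^{α₁}⋯t_l^{α_l}`. -/
def tw (α : Fin l → ℕ) : FreeGroup (Fin r ⊕ Fin l ⊕ Fin k) :=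
  (List.ofFn fun s : Fin l => (gt r l k s) ^ (α s)).prod

/-- A tuple `α` is admissible for the conjugators of the third family of relators:
`0 ≤ α_s ≤ d_s` for `s ≤ k` and `0 ≤ α_s < m_s` for `s > k`. -/
def Adm (m : Fin l → ℕ) (d : Fin k → ℕ) (α : Fin l → ℕ) : Prop :=
  (∀ (s : Fin l) (hs : (s : ℕ) < k), α s ≤ d ⟨s, hs⟩) ∧
  (∀ s : Fin l, k ≤ (s : ℕ) → α s < m s)

/-- The defining relators of the group `W_F`. -/
def WFRel (hkl : k ≤ l) (m : Fin l → ℕ) (d : Fin k → ℕ) (c : Fin k → ℕ → ℤ) :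
    Set (FreeGroup (Fin r ⊕ Fin l ⊕ Fin k)) :=
  {w | (∃ i : Fin l, k ≤ (i : ℕ) ∧ w = (gt r l k i) ^ (m i)) ∨
       (∃ i j : Fin k, w = pcomm (gu r l k i) (gu r l k j)) ∨
       (∃ i j : Fin l, w = pcomm (gt r l k i) (gt r l k j)) ∨
       (∃ (i : Fin l) (j : Fin k), w = pcomm (gt r l k i) (gu r l k j)) ∨
       (∃ i j : Fin r, w = pcomm (ga r l k i) (ga r l k j)) ∨
       (∃ (i j : Fin r) (α β : Fin l → ℕ), Adm l k m d α ∧ Adm l k m d β ∧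
         w = pcomm ((tw r l k α)⁻¹ * ga r l k i * tw r l k α)
                   ((tw r l k β)⁻¹ * ga r l k j * tw r l k β)) ∨
       (∃ (i : Fin r) (j : Fin k),
         w = ((gu r l k j)⁻¹ * ga r l k i * gu r l k j)⁻¹ *
           (List.ofFn fun s : Fin (d j + 1) =>
             (gt r l k (Fin.castLE hkl j)) ^ (-(s : ℤ)) * (ga r l k i) ^ (c j s) *
             (gt r l k (Fin.castLE hkl j)) ^ ((s : ℕ) : ℤ)).prod)}

end WF

/-! ### Commutators and words in free groups -/

section Commutators

variable {G H : Type*} [Group G] [Group H] {x y : G}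

theorem pcomm_eq_one_of_commute (h : Commute x y) : pcomm x y = 1 := by
  simp [pcomm, mul_assoc, h.eq]

theorem map_pcomm (f : G →* H) (x y : G) : f (pcomm x y) = pcomm (f x) (f y) := by simp [pcomm]

theorem isMetabelian_quotient {N : Subgroup G} [N.Normal]
    (h : ∀ v w, v ∈ commutator G → w ∈ commutator G → pcomm v w ∈ N) : IsMetabelian (G ⧸ N) := by
  have hmap : commutator (G ⧸ N) = (commutator G).map (QuotientGroup.mk' N) := by
    rw [commutator_def, commutator_def, Subgroup.map_commutator, ← MonoidHom.range_eq_map,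
      MonoidHom.range_eq_top.2 (QuotientGroup.mk'_surjective N)]
  rintro x y hx hy
  rw [hmap] at hx hy
  obtain ⟨v, hv, rfl⟩ := hx
  obtain ⟨w, hw, rfl⟩ := hy
  have hvw := (QuotientGroup.eq_one_iff (N := N) _).2 (h v⁻¹ w⁻¹ (inv_mem hv) (inv_mem hw))
  simpa [pcomm, mul_inv_eq_one, mul_inv_eq_iff_eq_mul] using hvw

end Commutators

section FreeGroupWords

variable {X Y : Type*}

theorem freeNorm_eq_norm [DecidableEq X] (w : FreeGroup X) : freeNorm w = w.norm := by
  unfold freeNorm FreeGroup.norm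
  congr!

@[simp]
theorem freeNorm_one : freeNorm (1 : FreeGroup X) = 0 := by
  classical rw [freeNorm_eq_norm, FreeGroup.norm_one]

@[simp]
theorem freeNorm_of (x : X) : freeNorm (FreeGroup.of x) = 1 := by
  classical rw [freeNorm_eq_norm, FreeGroup.norm_of]

@[simp]
theorem freeNorm_inv (w : FreeGroup X) : freeNorm w⁻¹ = freeNorm w := by
  classical rw [freeNorm_eq_norm, freeNorm_eq_norm, FreeGroup.norm_inv_eq]

theorem freeNorm_mul_le (v w : FreeGroup X) : freeNorm (v * w) ≤ freeNorm v + freeNorm w := by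
  classical simpa only [freeNorm_eq_norm] using FreeGroup.norm_mul_le v w

theorem freeNorm_pcomm_le (v w : FreeGroup X) :
    freeNorm (pcomm v w) ≤ 2 * freeNorm v + 2 * freeNorm w := by
  have h₁ := freeNorm_mul_le (v⁻¹ * w⁻¹ * v) w
  have h₂ := freeNorm_mul_le (v⁻¹ * w⁻¹) v
  have h₃ := freeNorm_mul_le v⁻¹ w⁻¹
  rw [freeNorm_inv, freeNorm_inv] at h₃
  rw [pcomm]
  omega

theorem freeNorm_pow_le (w : FreeGroup X) (n : ℕ) : freeNorm (w ^ n) ≤ n * freeNorm w := by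
  induction n with
  | zero => simp
  | succ n ih =>
    rw [pow_succ, Nat.succ_mul]
    exact (freeNorm_mul_le _ _).trans (Nat.add_le_add_right ih _)

theorem freeNorm_zpow_le (w : FreeGroup X) (n : ℤ) : freeNorm (w ^ n) ≤ n.natAbs * freeNorm w := by
  obtain ⟨n, rfl | rfl⟩ := n.eq_nat_or_neg
  · simpa using freeNorm_pow_le w n
  · simpa using freeNorm_pow_le w n

theorem exists_freeNorm_eq_succ {w : FreeGroup X} (hw : w ≠ 1) :
    ∃ (x : X) (v : FreeGroup X), freeNorm w = freeNorm v + 1 ∧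
      (w = FreeGroup.of x * v ∨ w = (FreeGroup.of x)⁻¹ * v) := by
  classical
  rcases h : w.toWord with _ | ⟨⟨x, b⟩, L⟩
  · exact absurd (FreeGroup.toWord_eq_nil_iff.1 h) hw
  have hL : (FreeGroup.mk L).toWord = L := by
    have hred : FreeGroup.IsReduced ((x, b) :: L) := h ▸ FreeGroup.isReduced_toWord
    rw [FreeGroup.toWord_mk, (hred.infix (List.suffix_cons _ _).isInfix).reduce_eq]
  have hw' : w = FreeGroup.mk [(x, b)] * FreeGroup.mk L := by
    rw [FreeGroup.mul_mk, List.singleton_append, ← h, FreeGroup.mk_toWord]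
  refine ⟨x, FreeGroup.mk L, ?_, ?_⟩
  · rw [freeNorm_eq_norm, freeNorm_eq_norm, FreeGroup.norm, FreeGroup.norm, h, hL,
      List.length_cons]
  · cases b
    · exact .inr hw'
    · exact .inl hw'

@[elab_as_elim]
theorem freeNorm_induction {motive : FreeGroup X → Prop} (one : motive 1)
    (of_mul : ∀ x w, freeNorm (FreeGroup.of x * w) = freeNorm w + 1 → motive w →
      motive (FreeGroup.of x * w))
    (inv_of_mul : ∀ x w, freeNorm ((FreeGroup.of x)⁻¹ * w) = freeNorm w + 1 → motive w →
      motive ((FreeGroup.of x)⁻¹ * w))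
    (w : FreeGroup X) : motive w := by
  induction h : freeNorm w using Nat.strong_induction_on generalizing w with
  | _ n ih =>
    by_cases hw : w = 1
    · exact hw ▸ one
    obtain ⟨x, v, hv, rfl | rfl⟩ := exists_freeNorm_eq_succ hw
    · exact of_mul x v hv (ih _ (by omega) v rfl)
    · exact inv_of_mul x v hv (ih _ (by omega) v rfl)

theorem freeNorm_lift_le {f : X → FreeGroup Y} {C : ℕ} (hf : ∀ x, freeNorm (f x) ≤ C)
    (w : FreeGroup X) : freeNorm (FreeGroup.lift f w) ≤ freeNorm w * C := by
  induction w using freeNorm_induction with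
  | one => simp
  | of_mul x w hw ih =>
    rw [hw, map_mul, FreeGroup.lift_apply_of, Nat.succ_mul, add_comm]
    exact (freeNorm_mul_le _ _).trans (add_le_add (hf x) ih)
  | inv_of_mul x w hw ih =>
    rw [hw, map_mul, map_inv, FreeGroup.lift_apply_of, Nat.succ_mul, add_comm]
    exact (freeNorm_mul_le _ _).trans (add_le_add ((freeNorm_inv (f x)).trans_le (hf x)) ih)

theorem freeNorm_map_le (f : X → Y) (w : FreeGroup X) :
    freeNorm (FreeGroup.map f w) ≤ freeNorm w := by
  simpa [FreeGroup.map_eq_lift] using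
    freeNorm_lift_le (C := 1) (f := FreeGroup.of ∘ f) (by simp) w

/-- The exponent sum of the generator `x` in a word `w`. -/
noncomputable def expSum (w : FreeGroup X) (x : X) : ℤ :=
  letI := Classical.decEq X
  (FreeGroup.lift fun y => Multiplicative.ofAdd (if y = x then (1 : ℤ) else 0)) w |>.toAdd

@[simp]
theorem expSum_one (x : X) : expSum 1 x = 0 := by simp [expSum]

@[simp]
theorem expSum_mul (v w : FreeGroup X) (x : X) : expSum (v * w) x = expSum v x + expSum w x := by
  simp [expSum]

@[simp]
theorem expSum_inv (w : FreeGroup X) (x : X) : expSum w⁻¹ x = -expSum w x := by simp [expSum]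

@[simp]
theorem expSum_pow (w : FreeGroup X) (n : ℕ) (x : X) : expSum (w ^ n) x = n * expSum w x := by
  simp [expSum]

@[simp]
theorem expSum_zpow (w : FreeGroup X) (n : ℤ) (x : X) : expSum (w ^ n) x = n * expSum w x := by
  simp [expSum]

@[simp]
theorem expSum_of_self (x : X) : expSum (FreeGroup.of x) x = 1 := by simp [expSum]

theorem expSum_of_ne {x y : X} (h : y ≠ x) : expSum (FreeGroup.of y) x = 0 := by simp [expSum, h]

theorem expSum_of [DecidableEq X] (x y : X) :
    expSum (FreeGroup.of y) x = if y = x then 1 else 0 := by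
  split_ifs with h
  · rw [h, expSum_of_self]
  · exact expSum_of_ne h

theorem expSum_list_prod (L : List (FreeGroup X)) (x : X) :
    expSum L.prod x = (L.map (expSum · x)).sum := by
  induction L with
  | nil => simp
  | cons w L ih => simp [ih]

theorem abs_expSum_of_le (x y : X) : |expSum (FreeGroup.of y) x| ≤ 1 := by
  classical
  rw [expSum_of]
  split_ifs <;> simp

theorem abs_expSum_le (w : FreeGroup X) (x : X) : |expSum w x| ≤ freeNorm w := by
  induction w using freeNorm_induction with
  | one => simp
  | of_mul y w hw ih =>
    have hy := abs_expSum_of_le x y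
    have habs := abs_add_le (expSum (FreeGroup.of y) x) (expSum w x)
    rw [hw, expSum_mul]
    push_cast
    linarith
  | inv_of_mul y w hw ih =>
    have hy := abs_expSum_of_le x y
    have habs := abs_add_le (-expSum (FreeGroup.of y) x) (expSum w x)
    rw [abs_neg] at habs
    rw [hw, expSum_mul, expSum_inv]
    push_cast
    linarith

theorem expSum_eq_zero_of_mem_commutator {w : FreeGroup X} (hw : w ∈ commutator (FreeGroup X))
    (x : X) : expSum w x = 0 := by
  let e : FreeGroup X →* Multiplicative ℤ :=
    ⟨⟨fun v => .ofAdd (expSum v x), by simp⟩, fun v v' => by simp⟩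
  exact Abelianization.commutator_subset_ker e hw

theorem dvd_expSum_of_mem_normalClosure {R : Set (FreeGroup X)} {x : X} {n : ℤ}
    (hR : ∀ w ∈ R, n ∣ expSum w x) {w : FreeGroup X} (hw : w ∈ Subgroup.normalClosure R) :
    n ∣ expSum w x := by
  let H : Subgroup (FreeGroup X) :=
    { carrier := {v | n ∣ expSum v x}
      one_mem' := by simp
      mul_mem' := fun h h' => by simpa using dvd_add h h'
      inv_mem' := by simp }
  have hH : H.Normal := ⟨fun v (hv : n ∣ expSum v x) g => by
    change n ∣ expSum (g * v * g⁻¹) x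
    simpa using hv⟩
  exact Subgroup.normalClosure_le_normal (N := H) hR hw

theorem exists_eq_mul_of_mul_of_expSum_pos (f : X → Y) {w : FreeGroup X} {y : Y}
    (hw : 0 < expSum (FreeGroup.map f w) y) :
    ∃ (x : X) (v v' : FreeGroup X), f x = y ∧ w = v * FreeGroup.of x * v' ∧
      freeNorm v + freeNorm v' < freeNorm w := by
  induction w using freeNorm_induction with
  | one => simp at hw
  | of_mul x w hnorm ih =>
    by_cases hx : f x = y
    · exact ⟨x, 1, w, hx, by simp, by simp [hnorm]⟩
    rw [map_mul, FreeGroup.map.of, expSum_mul, expSum_of_ne hx, zero_add] at hw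
    obtain ⟨x', v, v', hx', rfl, hlt⟩ := ih hw
    refine ⟨x', FreeGroup.of x * v, v', hx', by simp only [mul_assoc], ?_⟩
    have := freeNorm_mul_le (FreeGroup.of x) v
    rw [freeNorm_of] at this
    omega
  | inv_of_mul x w hnorm ih =>
    have hle : expSum (FreeGroup.map f ((FreeGroup.of x)⁻¹ * w)) y ≤
        expSum (FreeGroup.map f w) y := by
      classical
      rw [map_mul, map_inv, FreeGroup.map.of, expSum_mul, expSum_inv, expSum_of]
      split_ifs <;> omega
    obtain ⟨x', v, v', hx', rfl, hlt⟩ := ih (hw.trans_le hle)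
    refine ⟨x', (FreeGroup.of x)⁻¹ * v, v', hx', by simp only [mul_assoc], ?_⟩
    have := freeNorm_mul_le (FreeGroup.of x)⁻¹ v
    rw [freeNorm_inv, freeNorm_of] at this
    omega

theorem exists_eq_mul_inv_of_mul_of_expSum_neg (f : X → Y) {w : FreeGroup X} {y : Y}
    (hw : expSum (FreeGroup.map f w) y < 0) :
    ∃ (x : X) (v v' : FreeGroup X), f x = y ∧ w = v * (FreeGroup.of x)⁻¹ * v' ∧
      freeNorm v + freeNorm v' < freeNorm w := by
  obtain ⟨x, v, v', hx, hw', hlt⟩ := exists_eq_mul_of_mul_of_expSum_pos f (w := w⁻¹) (y := y)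
    (by rwa [map_inv, expSum_inv, neg_pos])
  refine ⟨x, v'⁻¹, v⁻¹, hx, ?_, by simpa [add_comm] using hlt⟩
  rw [← inv_inv w, hw']
  simp [mul_assoc]

/-- The word `∏ x ∈ L, x ^ e x`, in the order of the list `L`. -/
def powProd (L : List X) (e : X → ℤ) : FreeGroup X := (L.map fun x => FreeGroup.of x ^ e x).prod

theorem freeNorm_powProd_le (L : List X) (e : X → ℤ) :
    freeNorm (powProd L e) ≤ (L.map fun x => (e x).natAbs).sum := by
  induction L with
  | nil => simp [powProd]
  | cons x L ih =>
    simp only [powProd, List.map_cons, List.prod_cons, List.sum_cons] at ih ⊢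
    refine (freeNorm_mul_le _ _).trans (Nat.add_le_add ?_ ih)
    simpa using freeNorm_zpow_le (FreeGroup.of x) (e x)

theorem expSum_powProd_of_notMem {L : List X} {x : X} (hx : x ∉ L) (e : X → ℤ) :
    expSum (powProd L e) x = 0 := by
  rw [powProd, expSum_list_prod, List.map_map]
  refine List.sum_eq_zero fun n hn => ?_
  obtain ⟨y, hy, rfl⟩ := List.mem_map.1 hn
  simp [expSum_of_ne (ne_of_mem_of_not_mem hy hx)]

theorem expSum_powProd_of_mem {L : List X} (hL : L.Nodup) {x : X} (hx : x ∈ L) (e : X → ℤ) :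
    expSum (powProd L e) x = e x := by
  induction L with
  | nil => simp at hx
  | cons y L ih =>
    obtain ⟨hy, hL⟩ := List.nodup_cons.1 hL
    have hcons : powProd (y :: L) e = FreeGroup.of y ^ e y * powProd L e := by simp [powProd]
    rw [hcons, expSum_mul, expSum_zpow]
    rcases List.mem_cons.1 hx with rfl | hx
    · rw [expSum_powProd_of_notMem hy, expSum_of_self, mul_one, add_zero]
    · rw [ih hL hx, expSum_of_ne (ne_of_mem_of_not_mem hx hy).symm, mul_zero, zero_add]

theorem lift_powProd_finRange_succ {G : Type*} [Group G] {n : ℕ} {e : Fin (n + 1) → ℤ}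
    (he : e 0 = 1) (x : Fin (n + 1) → G) :
    FreeGroup.lift x (powProd (List.finRange (n + 1)) e) =
      x 0 * FreeGroup.lift (x ∘ Fin.succ) (powProd (List.finRange n) (e ∘ Fin.succ)) := by
  simp [powProd, List.finRange_succ, map_list_prod, he, comp_def]

theorem lift_powProd_finRange_succ_last {G : Type*} [Group G] {n : ℕ} {e : Fin (n + 1) → ℤ}
    (he : e (Fin.last n) = 1) (x : Fin (n + 1) → G) :
    FreeGroup.lift x (powProd (List.finRange (n + 1)) e) =
      FreeGroup.lift (x ∘ Fin.castSucc) (powProd (List.finRange n) (e ∘ Fin.castSucc)) *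
        x (Fin.last n) := by
  simp [powProd, List.finRange_succ_last, map_list_prod, he, comp_def]

theorem lift_powProd_finRange {A : Type*} [CommGroup A] {n : ℕ} (x : Fin n → A) (e : Fin n → ℤ) :
    FreeGroup.lift x (powProd (List.finRange n) e) = ∏ s, x s ^ e s := by
  rw [← List.prod_ofFn, List.ofFn_eq_map, powProd, map_list_prod, List.map_map]
  simp [comp_def]

theorem freeNorm_powProd_finRange_le (n : ℕ) (e : Fin n → ℤ) :
    freeNorm (powProd (List.finRange n) e) ≤ ∑ s, (e s).natAbs :=
  (freeNorm_powProd_le _ _).trans_eq (by rw [← List.ofFn_eq_map, List.sum_ofFn])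

end FreeGroupWords

/-! ### Areas of words -/

section Area

variable {G : Type*} [Group G] {R : Set G} {M N : ℕ}

/-- The conjugates of elements of `R ∪ R⁻¹`: the factors counted by the area. -/
def relatorConjugates (R : Set G) : Set G :=
  {x | ∃ r f : G, (r ∈ R ∨ r⁻¹ ∈ R) ∧ f⁻¹ * r * f = x}

theorem inv_mem_relatorConjugates {x : G} (hx : x ∈ relatorConjugates R) :
    x⁻¹ ∈ relatorConjugates R := by
  obtain ⟨r, f, hr, rfl⟩ := hx
  exact ⟨r⁻¹, f, by rwa [inv_inv, or_comm], by group⟩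

theorem conj_mem_relatorConjugates {x : G} (hx : x ∈ relatorConjugates R) (g : G) :
    g⁻¹ * x * g ∈ relatorConjugates R := by
  obtain ⟨r, f, hr, rfl⟩ := hx
  exact ⟨r, f * g, hr, by group⟩

theorem areaLe_iff_exists_list {w : G} :
    AreaLe R w N ↔
      ∃ L : List G, L.length ≤ N ∧ (∀ x ∈ L, x ∈ relatorConjugates R) ∧ L.prod = w := by
  constructor
  · rintro ⟨N', hN, r, f, hr, rfl⟩
    refine ⟨_, by simpa using hN, fun x hx => ?_, rfl⟩
    obtain ⟨i, rfl⟩ := List.mem_ofFn.1 hx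
    exact ⟨r i, f i, hr i, rfl⟩
  · rintro ⟨L, hL, hx, rfl⟩
    choose r f hr hf using fun i : Fin L.length => hx _ (List.get_mem L i)
    exact ⟨L.length, hL, r, f, hr, by rw [funext hf, List.ofFn_get]⟩

namespace AreaLe

theorem one (R : Set G) (N : ℕ) : AreaLe R 1 N :=
  areaLe_iff_exists_list.2 ⟨[], by simp, by simp, rfl⟩

theorem mono {w : G} (h : AreaLe R w M) (hMN : M ≤ N) : AreaLe R w N := by
  obtain ⟨N', hN', hw⟩ := h
  exact ⟨N', hN'.trans hMN, hw⟩

theorem mul {v w : G} (hv : AreaLe R v M) (hw : AreaLe R w N) : AreaLe R (v * w) (M + N) := by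
  rw [areaLe_iff_exists_list] at *
  obtain ⟨L, hL, hLR, rfl⟩ := hv
  obtain ⟨L', hL', hLR', rfl⟩ := hw
  refine ⟨L ++ L', by simp; omega, fun x hx => ?_, by simp⟩
  exact (List.mem_append.1 hx).elim (hLR x) (hLR' x)

theorem inv {w : G} (hw : AreaLe R w N) : AreaLe R w⁻¹ N := by
  rw [areaLe_iff_exists_list] at *
  obtain ⟨L, hL, hLR, rfl⟩ := hw
  refine ⟨(L.map (·⁻¹)).reverse, by simpa using hL, fun x hx => ?_, L.prod_inv_reverse.symm⟩
  obtain ⟨y, hy, rfl⟩ := List.mem_map.1 (List.mem_reverse.1 hx)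
  exact inv_mem_relatorConjugates (hLR y hy)

theorem conj {w : G} (hw : AreaLe R w N) (g : G) : AreaLe R (g⁻¹ * w * g) N := by
  rw [areaLe_iff_exists_list] at *
  obtain ⟨L, hL, hLR, rfl⟩ := hw
  refine ⟨L.map (MulAut.conj g⁻¹), by simpa using hL, fun x hx => ?_, ?_⟩
  · obtain ⟨y, hy, rfl⟩ := List.mem_map.1 hx
    simpa using conj_mem_relatorConjugates (hLR y hy) g
  · rw [← map_list_prod, MulAut.conj_apply, inv_inv]

theorem of_mem {w : G} (hw : w ∈ R) : AreaLe R w 1 :=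
  areaLe_iff_exists_list.2 ⟨[w], by simp, by simpa using ⟨w, 1, .inl hw, by simp⟩, by simp⟩

theorem mem_normalClosure {w : G} (hw : AreaLe R w N) : w ∈ Subgroup.normalClosure R := by
  obtain ⟨L, -, hLR, rfl⟩ := areaLe_iff_exists_list.1 hw
  refine Subgroup.list_prod_mem _ fun x hx => ?_
  obtain ⟨r, f, hr, rfl⟩ := hLR x hx
  have hr' : r ∈ Subgroup.normalClosure R :=
    hr.elim (Subgroup.subset_normalClosure ·)
      fun h => inv_mem_iff.1 (Subgroup.subset_normalClosure h)
  simpa using Subgroup.normalClosure_normal.conj_mem r hr' f⁻¹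

theorem pow {w : G} (hw : AreaLe R w N) (n : ℕ) : AreaLe R (w ^ n) (n * N) := by
  induction n with
  | zero => simpa using one R _
  | succ n ih => rw [pow_succ, Nat.succ_mul]; exact ih.mul hw

theorem zpow {w : G} (hw : AreaLe R w N) (n : ℤ) : AreaLe R (w ^ n) (n.natAbs * N) := by
  obtain ⟨n, rfl | rfl⟩ := n.eq_nat_or_neg
  · simpa using hw.pow n
  · simpa using (hw.pow n).inv

end AreaLe

/-- `x` and `y` differ by a product of at most `N` conjugates of relators. -/
def ApproxEq (R : Set G) (N : ℕ) (x y : G) : Prop := AreaLe R (x * y⁻¹) N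

theorem approxEq_one_iff {x : G} : ApproxEq R N x 1 ↔ AreaLe R x N := by simp [ApproxEq]

namespace ApproxEq

variable {x y z x' y' : G}

theorem of_eq (R : Set G) (N : ℕ) (h : x = y) : ApproxEq R N x y := by
  rw [ApproxEq, h, mul_inv_cancel]
  exact AreaLe.one R N

theorem symm (h : ApproxEq R N x y) : ApproxEq R N y x := by
  simpa [ApproxEq] using AreaLe.inv h

theorem trans (h : ApproxEq R M x y) (h' : ApproxEq R N y z) : ApproxEq R (M + N) x z := by
  simpa [ApproxEq, mul_assoc] using AreaLe.mul h h'

theorem mono (h : ApproxEq R M x y) (hMN : M ≤ N) : ApproxEq R N x y := AreaLe.mono h hMN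

theorem mul (h : ApproxEq R M x y) (h' : ApproxEq R N x' y') :
    ApproxEq R (M + N) (x * x') (y * y') := by
  have := AreaLe.mul (AreaLe.conj h' x⁻¹) h
  rw [ApproxEq, add_comm]
  convert this using 1
  group

theorem mul_left (h : ApproxEq R N x y) (z : G) : ApproxEq R N (z * x) (z * y) := by
  simpa using (of_eq R 0 (Eq.refl z)).mul h

theorem mul_right (h : ApproxEq R N x y) (z : G) : ApproxEq R N (x * z) (y * z) := by
  simpa using h.mul (of_eq R 0 (Eq.refl z))

theorem inv (h : ApproxEq R N x y) : ApproxEq R N x⁻¹ y⁻¹ := by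
  simpa [ApproxEq, mul_assoc] using AreaLe.conj h.symm y

theorem conj (h : ApproxEq R N x y) (g : G) : ApproxEq R N (g⁻¹ * x * g) (g⁻¹ * y * g) :=
  (h.mul_left g⁻¹).mul_right g

theorem areaLe (h : ApproxEq R M x y) (hy : AreaLe R y N) : AreaLe R x (M + N) :=
  approxEq_one_iff.1 (h.trans (approxEq_one_iff.2 hy))

end ApproxEq

/-- `x` and `y` commute up to a product of at most `N` conjugates of relators. -/
def ApproxCommute (R : Set G) (N : ℕ) (x y : G) : Prop := ApproxEq R N (x * y) (y * x)

theorem approxCommute_iff_areaLe_pcomm {x y : G} :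
    ApproxCommute R N x y ↔ AreaLe R (pcomm x y) N := by
  have hconj : pcomm x y = (y * x)⁻¹ * (x * y * (y * x)⁻¹) * (y * x) := by unfold pcomm; group
  refine ⟨fun h => hconj ▸ AreaLe.conj h _, fun h => ?_⟩
  simpa [ApproxCommute, ApproxEq, hconj, mul_assoc] using h.conj (y * x)⁻¹

namespace ApproxCommute

variable {x y z : G}

theorem symm (h : ApproxCommute R N x y) : ApproxCommute R N y x := ApproxEq.symm h

theorem mono (h : ApproxCommute R M x y) (hMN : M ≤ N) : ApproxCommute R N x y :=
  AreaLe.mono h hMN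

theorem one_right (R : Set G) (N : ℕ) (x : G) : ApproxCommute R N x 1 :=
  ApproxEq.of_eq R N (by simp)

theorem conj (h : ApproxCommute R N x y) (g : G) :
    ApproxCommute R N (g⁻¹ * x * g) (g⁻¹ * y * g) := by
  simpa [ApproxCommute, mul_assoc] using ApproxEq.conj h g

theorem mul_right (h : ApproxCommute R M x y) (h' : ApproxCommute R N x z) :
    ApproxCommute R (M + N) x (y * z) := by
  simpa [ApproxCommute, mul_assoc] using
    (ApproxEq.mul_right h z).trans (by simpa [mul_assoc] using ApproxEq.mul_left h' y)

theorem inv_right (h : ApproxCommute R N x y) : ApproxCommute R N x y⁻¹ := by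
  simpa [ApproxCommute, mul_assoc] using ((ApproxEq.mul_left h y⁻¹).mul_right y⁻¹).symm

theorem lift_right {ι : Type*} {g : ι → G} (h : ∀ i, ApproxCommute R N x (g i))
    (w : FreeGroup ι) : ApproxCommute R (freeNorm w * N) x (FreeGroup.lift g w) := by
  induction w using freeNorm_induction with
  | one => exact one_right R _ x
  | of_mul i w hw ih =>
    simp only [map_mul, FreeGroup.lift_apply_of, hw, Nat.succ_mul, add_comm _ N]
    exact (h i).mul_right ih
  | inv_of_mul i w hw ih =>
    simp only [map_mul, map_inv, FreeGroup.lift_apply_of, hw, Nat.succ_mul, add_comm _ N]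
    exact (h i).inv_right.mul_right ih

theorem lift_lift {ι κ : Type*} {f : ι → G} {g : κ → G}
    (h : ∀ i j, ApproxCommute R N (f i) (g j)) (v : FreeGroup ι) (w : FreeGroup κ) :
    ApproxCommute R (freeNorm v * (freeNorm w * N)) (FreeGroup.lift f v) (FreeGroup.lift g w) :=
  (lift_right (fun i => (lift_right (h i) w).symm) v).symm

theorem of_approxEq (h : ApproxCommute R N x y) {x' y' : G} {N' : ℕ} (hx : ApproxEq R M x' x)
    (hy : ApproxEq R N' y' y) : ApproxCommute R (N + 2 * M + 2 * N') x' y' :=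
  (((hx.mul hy).trans h).trans (hy.symm.mul hx.symm)).mono (by omega)

end ApproxCommute

end Area

section Cancellation

variable {G : Type*} [Group G] {R : Set G} {N : ℕ}

theorem ApproxCommute.of_mul_mul {a b x y : G} {N₁ N₂ N₃ : ℕ}
    (h : ApproxCommute R N (a * x) (y * b)) (hxy : ApproxCommute R N₁ x y)
    (hxb : ApproxCommute R N₂ x b) (hay : ApproxCommute R N₃ a y) :
    ApproxCommute R (N + N₁ + N₂ + N₃) a b := by
  have h₁ : ApproxEq R N₂ (y * (a * b * x)) (y * (a * x * b)) := by
    simpa only [mul_assoc] using ApproxEq.mul_left hxb.symm (y * a)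
  have h₂ : ApproxEq R N₃ (y * (a * x * b)) (a * (y * x) * b) := by
    simpa only [mul_assoc] using ApproxEq.mul_right hay.symm (x * b)
  have h₃ : ApproxEq R N₁ (a * (y * x) * b) (a * x * (y * b)) := by
    simpa only [mul_assoc] using (ApproxEq.mul_left hxy.symm a).mul_right b
  have h₄ : ApproxEq R N (a * x * (y * b)) (y * (b * a * x)) := by
    simpa only [ApproxCommute, mul_assoc] using h
  have hyx := (((h₁.trans h₂).trans h₃).trans h₄).mul_left y⁻¹ |>.mul_right x⁻¹
  simp only [inv_mul_cancel_left, mul_inv_cancel_right] at hyx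
  exact ApproxEq.mono hyx (by omega)

theorem AreaLe.mul_mul_mul_of_approxCommute {x y v v' : G} {N₁ N₂ : ℕ}
    (hxv : ApproxCommute R N x v) (hxy : AreaLe R (x * y) N₁) (hv : AreaLe R (v * v') N₂) :
    AreaLe R (x * (v * y * v')) (N + N₁ + N₂) := by
  have hmove : ApproxEq R N (x * (v * y * v')) (v * (x * y) * v') := by
    simpa only [mul_assoc] using ApproxEq.mul_right hxv (y * v')
  have hdrop : ApproxEq R N₁ (v * (x * y) * v') (v * v') := by
    simpa using ((approxEq_one_iff.2 hxy).mul_left v).mul_right v'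
  exact (hmove.trans hdrop).areaLe hv

variable {ι κ : Type*} {g : ι → G}

theorem areaLe_mul_lift_mul_lift {x y : G} {v v' : FreeGroup ι} {p : ℕ}
    (hx : ∀ i, ApproxCommute R N x (g i)) (hxy : AreaLe R (x * y) N) (hv : freeNorm v ≤ p)
    (hvv' : AreaLe R (FreeGroup.lift g (v * v')) (p ^ 2 * N)) :
    AreaLe R (x * (FreeGroup.lift g v * y * FreeGroup.lift g v')) ((p + 2) ^ 2 * N) := by
  rw [map_mul] at hvv'
  refine (AreaLe.mul_mul_mul_of_approxCommute (ApproxCommute.lift_right hx v) hxy hvv').mono ?_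
  calc freeNorm v * N + N + p ^ 2 * N ≤ p * N + N + p ^ 2 * N := by gcongr
    _ ≤ (p + 2) ^ 2 * N := by ring_nf; omega

-- The first letter of `w` is cancelled against a later letter with the same key and the opposite
-- sign, which exists because the exponent sums vanish.
theorem areaLe_lift_of_expSum_map_eq_zero (key : ι → κ)
    (hcomm : ∀ i j, ApproxCommute R N (g i) (g j))
    (hkey : ∀ i j, key i = key j → ApproxEq R N (g i) (g j)) (w : FreeGroup ι)
    (hw : ∀ q, expSum (FreeGroup.map key w) q = 0) :
    AreaLe R (FreeGroup.lift g w) (freeNorm w ^ 2 * N) := by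
  suffices h : ∀ n, freeNorm w ≤ n → AreaLe R (FreeGroup.lift g w) (n ^ 2 * N) from h _ le_rfl
  intro n hn
  induction n using Nat.strong_induction_on generalizing w with
  | _ n ih =>
  by_cases hw1 : w = 1
  · rw [hw1, map_one]
    exact AreaLe.one R _
  obtain ⟨i, u, hu, rfl | rfl⟩ := exists_freeNorm_eq_succ hw1
  · have hneg : expSum (FreeGroup.map key u) (key i) < 0 := by
      have := hw (key i)
      simp only [map_mul, FreeGroup.map.of, expSum_mul, expSum_of_self] at this
      omega
    obtain ⟨j, v, v', hj, rfl, hlt⟩ := exists_eq_mul_inv_of_mul_of_expSum_neg key hneg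
    obtain ⟨p, rfl⟩ : ∃ p, n = p + 2 := ⟨n - 2, by omega⟩
    have hvv' := ih p (by omega) (v * v') (fun q => by
      have := hw q
      simp only [map_mul, map_inv, FreeGroup.map.of, hj, expSum_mul, expSum_inv] at this ⊢
      omega) ((freeNorm_mul_le v v').trans (by omega))
    simpa using areaLe_mul_lift_mul_lift (hcomm i) (hkey i j hj.symm) (by omega) hvv'
  · have hpos : 0 < expSum (FreeGroup.map key u) (key i) := by
      have := hw (key i)
      simp only [map_mul, map_inv, FreeGroup.map.of, expSum_mul, expSum_inv, expSum_of_self] at this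
      omega
    obtain ⟨j, v, v', hj, rfl, hlt⟩ := exists_eq_mul_of_mul_of_expSum_pos key hpos
    obtain ⟨p, rfl⟩ : ∃ p, n = p + 2 := ⟨n - 2, by omega⟩
    have hvv' := ih p (by omega) (v * v') (fun q => by
      have := hw q
      simp only [map_mul, map_inv, FreeGroup.map.of, hj, expSum_mul, expSum_inv] at this ⊢
      omega) ((freeNorm_mul_le v v').trans (by omega))
    simpa using areaLe_mul_lift_mul_lift (fun p => (hcomm i p).symm.inv_right.symm)
      (by simpa [ApproxEq] using (hkey i j hj.symm).inv) (by omega) hvv'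

theorem areaLe_lift_powProd (L : List ι) {μ : ι → ℕ} {e : ι → ℤ}
    (hμ : ∀ i, AreaLe R (g i ^ μ i) N) (he : ∀ i, (μ i : ℤ) ∣ e i) :
    AreaLe R (FreeGroup.lift g (powProd L e)) ((L.map fun i => (e i).natAbs).sum * N) := by
  induction L with
  | nil => simpa [powProd] using AreaLe.one R _
  | cons i L ih =>
    have hi : AreaLe R (g i ^ e i) ((e i).natAbs * N) := by
      obtain ⟨q, hq⟩ := he i
      rcases Nat.eq_zero_or_pos (μ i) with h0 | hpos
      · simpa [hq, h0] using AreaLe.one R _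
      · rw [hq, zpow_mul, zpow_natCast, Int.natAbs_mul, Int.natAbs_natCast]
        exact ((hμ i).zpow q).mono (Nat.mul_le_mul_right _ (Nat.le_mul_of_pos_left _ hpos))
    simp only [powProd, List.map_cons, List.prod_cons, map_mul, map_zpow, FreeGroup.lift_apply_of,
      List.sum_cons, add_mul] at ih ⊢
    exact hi.mul ih

theorem areaLe_lift_of_dvd_expSum [Fintype ι] {μ : ι → ℕ}
    (hcomm : ∀ i j, ApproxCommute R N (g i) (g j)) (hμ : ∀ i, AreaLe R (g i ^ μ i) N)
    (w : FreeGroup ι) (hw : ∀ i, (μ i : ℤ) ∣ expSum w i) :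
    AreaLe R (FreeGroup.lift g w) ((Fintype.card ι + 2) ^ 2 * freeNorm w ^ 2 * N) := by
  set L : List ι := Finset.univ.toList with hL
  set v : FreeGroup ι := powProd L (expSum w)
  have hsum : (L.map fun i => (expSum w i).natAbs).sum ≤ Fintype.card ι * freeNorm w := by
    have hle : ∀ i ∈ (Finset.univ : Finset ι), (expSum w i).natAbs ≤ freeNorm w := fun i _ => by
      have := abs_expSum_le w i
      rw [Int.abs_eq_natAbs] at this
      exact_mod_cast this
    simpa [hL, Finset.sum_map_toList] using Finset.sum_le_card_nsmul _ _ _ hle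
  have hvnorm : freeNorm v ≤ Fintype.card ι * freeNorm w :=
    (freeNorm_powProd_le L _).trans hsum
  have hexp : ∀ q, expSum (FreeGroup.map id (w * v⁻¹)) q = 0 := fun q => by
    rw [FreeGroup.map.id, expSum_mul, expSum_inv,
      expSum_powProd_of_mem (Finset.nodup_toList _) (by simp), add_neg_cancel]
  have hwv := areaLe_lift_of_expSum_map_eq_zero id hcomm
    (fun i j hij => ApproxEq.of_eq R N (congrArg g hij)) (w * v⁻¹) hexp
  have hv' := areaLe_lift_powProd L hμ hw
  have hprod := hwv.mul hv'
  rw [map_mul, map_inv, inv_mul_cancel_right] at hprod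
  refine hprod.mono ?_
  have hnorm : freeNorm (w * v⁻¹) ≤ (Fintype.card ι + 1) * freeNorm w := by
    have := freeNorm_mul_le w v⁻¹
    rw [freeNorm_inv] at this
    rw [Nat.succ_mul]
    omega
  calc freeNorm (w * v⁻¹) ^ 2 * N + (L.map fun i => (expSum w i).natAbs).sum * N
      ≤ ((Fintype.card ι + 1) * freeNorm w) ^ 2 * N + Fintype.card ι * freeNorm w * N := by gcongr
    _ ≤ ((Fintype.card ι + 1) * freeNorm w) ^ 2 * N + Fintype.card ι * freeNorm w ^ 2 * N := by
      gcongr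
      exact Nat.le_self_pow two_ne_zero _
    _ ≤ (Fintype.card ι + 2) ^ 2 * freeNorm w ^ 2 * N := by ring_nf; omega

end Cancellation

/-! ### Growth of functions and Dehn functions -/

section Growth

/-- `f` grows at most exponentially. -/
def ExpBounded (f : ℕ → ℕ) : Prop := ∃ C, ∀ n, f n ≤ C ^ (n + 1)

namespace ExpBounded

variable {f g : ℕ → ℕ}

theorem mono (hg : ExpBounded g) (h : ∀ n, f n ≤ g n) : ExpBounded f := by
  obtain ⟨C, hC⟩ := hg
  exact ⟨C, fun n => (h n).trans (hC n)⟩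

theorem const (a : ℕ) : ExpBounded fun _ => a := ⟨a, fun n => Nat.le_self_pow n.succ_ne_zero a⟩

theorem id : ExpBounded fun n => n :=
  ⟨2, fun n => n.lt_two_pow_self.le.trans (Nat.pow_le_pow_right two_pos n.le_succ)⟩

theorem add (hf : ExpBounded f) (hg : ExpBounded g) : ExpBounded fun n => f n + g n := by
  obtain ⟨⟨C, hC⟩, ⟨D, hD⟩⟩ := hf, hg
  exact ⟨C + D, fun n => (add_le_add (hC n) (hD n)).trans
    (pow_add_pow_le C.zero_le D.zero_le n.succ_ne_zero)⟩

theorem mul (hf : ExpBounded f) (hg : ExpBounded g) : ExpBounded fun n => f n * g n := by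
  obtain ⟨⟨C, hC⟩, ⟨D, hD⟩⟩ := hf, hg
  exact ⟨C * D, fun n => (Nat.mul_le_mul (hC n) (hD n)).trans_eq (mul_pow _ _ _).symm⟩

theorem pow (hf : ExpBounded f) (b : ℕ) : ExpBounded fun n => f n ^ b := by
  obtain ⟨C, hC⟩ := hf
  exact ⟨C ^ b, fun n => (Nat.pow_le_pow_left (hC n) b).trans_eq (pow_right_comm _ _ _)⟩

theorem const_pow (a : ℕ) : ExpBounded fun n => a ^ n :=
  ⟨a + 1, fun n => (Nat.pow_le_pow_left a.le_succ n).trans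
    (Nat.pow_le_pow_right a.succ_pos n.le_succ)⟩

theorem comp_affine (hf : ExpBounded f) (a b : ℕ) : ExpBounded fun n => f (a * n + b) := by
  obtain ⟨C, hC⟩ := hf
  refine ⟨(C + 1) ^ (a + b + 1), fun n => (hC _).trans ?_⟩
  calc C ^ (a * n + b + 1) ≤ (C + 1) ^ (a * n + b + 1) := Nat.pow_le_pow_left C.le_succ _
    _ ≤ (C + 1) ^ ((a + b + 1) * (n + 1)) := Nat.pow_le_pow_right C.succ_pos (by ring_nf; omega)
    _ = ((C + 1) ^ (a + b + 1)) ^ (n + 1) := pow_mul _ _ _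

theorem dominates (hf : ExpBounded f) : Dominates f fun n => 2 ^ n := by
  obtain ⟨C, hC⟩ := hf
  refine ⟨2 ^ C, by positivity, fun n => le_add_right (le_add_right ((hC n).trans ?_))⟩
  calc C ^ (n + 1) ≤ (2 ^ C) ^ (n + 1) := Nat.pow_le_pow_left C.lt_two_pow_self.le _
    _ = 2 ^ C * 2 ^ (C * n) := by rw [pow_succ', ← pow_mul]
    _ ≤ 2 ^ C * 2 ^ (2 ^ C * n) := by
      gcongr
      exacts [one_le_two, C.lt_two_pow_self.le]

end ExpBounded

end Growth

section DehnFunctions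

variable {X : Type*} {R : Set (FreeGroup X)}

theorem exists_isDehnFunctionOf_le {A : ℕ → ℕ}
    (hA : ∀ n, ∀ w ∈ Subgroup.normalClosure R, freeNorm w ≤ n → AreaLe R w (A n)) :
    ∃ δ, IsDehnFunctionOf R δ ∧ ∀ n, δ n ≤ A n :=
  ⟨fun n => sInf {N | ∀ w ∈ Subgroup.normalClosure R, freeNorm w ≤ n → AreaLe R w N},
    fun n => ⟨Nat.sInf_mem ⟨A n, hA n⟩, fun _ hN => Nat.sInf_le hN⟩,
    fun n => Nat.sInf_le (hA n)⟩

theorem IsDehnFunctionOf.two_pow_dominates {δ : ℕ → ℕ} (hδ : IsDehnFunctionOf R δ) {ρ C : ℝ}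
    {a b : ℕ} (hρ : 1 < ρ) (h : ∀ n, ∃ w ∈ Subgroup.normalClosure R, freeNorm w ≤ a * n + b ∧
      ∀ N : ℕ, AreaLe R w N → ρ ^ n ≤ 1 + N * C) : Dominates (fun n => 2 ^ n) δ := by
  obtain ⟨P, hP⟩ := pow_unbounded_of_one_lt 2 hρ
  obtain ⟨D, hCD⟩ := exists_nat_ge C
  set E := a * P + b + D + 1
  refine ⟨E, by omega, fun n => ?_⟩
  rcases n.eq_zero_or_pos with rfl | hn
  · simp only [pow_zero]
    omega
  obtain ⟨w, hw, hnorm, harea⟩ := h (P * n)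
  have hlen : freeNorm w ≤ E * n := by
    refine hnorm.trans ?_
    calc a * (P * n) + b ≤ a * P * n + b * n := by
          rw [← mul_assoc]
          exact Nat.add_le_add_left (Nat.le_mul_of_pos_right b hn) _
      _ ≤ E * n := by
          rw [← add_mul]
          exact Nat.mul_le_mul_right n (by omega)
  have hpow : (2 : ℝ) ^ n ≤ 1 + δ (E * n) * D := by
    calc (2 : ℝ) ^ n ≤ (ρ ^ P) ^ n := by gcongr
      _ = ρ ^ (P * n) := (pow_mul _ _ _).symm
      _ ≤ 1 + δ (E * n) * C := harea _ ((hδ _).1 w hw hlen)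
      _ ≤ 1 + δ (E * n) * D := by gcongr
  calc 2 ^ n ≤ 1 + δ (E * n) * D := by exact_mod_cast hpow
    _ ≤ E + δ (E * n) * E := by gcongr <;> omega
    _ ≤ E * δ (E * n) + E * n + E := by
      rw [mul_comm (δ _)]
      omega

end DehnFunctions

/-! ### Commuting conjugates in `W_F` -/

namespace WF

variable {r l k : ℕ} {hkl : k ≤ l} {m : Fin l → ℕ} {d : Fin k → ℕ} {c : Fin k → ℕ → ℤ}

local notation "ℛ" => WFRel r l k hkl m d c

/-- A word in the letters `t`, `u` as a word in all the generators of `W_F`. -/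
def tuWord (r : ℕ) {l k : ℕ} : FreeGroup (Fin l ⊕ Fin k) →* FreeGroup (Fin r ⊕ Fin l ⊕ Fin k) :=
  FreeGroup.map Sum.inr

/-- The conjugate `a_i ^ p` of a generator by a word `p` in the letters `t`, `u`. -/
def conjGen (i : Fin r) (p : FreeGroup (Fin l ⊕ Fin k)) : FreeGroup (Fin r ⊕ Fin l ⊕ Fin k) :=
  (tuWord r p)⁻¹ * ga r l k i * tuWord r p

@[simp]
theorem conjGen_one (i : Fin r) : conjGen i 1 = ga r l k i := by simp [conjGen]

theorem conj_conjGen (i : Fin r) (p q : FreeGroup (Fin l ⊕ Fin k)) :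
    (tuWord r q)⁻¹ * conjGen i p * tuWord r q = conjGen i (p * q) := by
  simp [conjGen, mul_assoc]

theorem conjGen_zpow (i : Fin r) (p : FreeGroup (Fin l ⊕ Fin k)) (n : ℤ) :
    conjGen i p ^ n = (tuWord r p)⁻¹ * ga r l k i ^ n * tuWord r p := by
  simpa [conjGen] using conj_zpow (a := (tuWord r p)⁻¹) (b := ga r l k i) (i := n)

theorem tuWord_eq_lift (p : FreeGroup (Fin l ⊕ Fin k)) :
    tuWord r p = FreeGroup.lift (fun y => FreeGroup.of (Sum.inr y)) p :=
  DFunLike.congr_fun FreeGroup.map_eq_lift p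

theorem freeNorm_conjGen_le (i : Fin r) (p : FreeGroup (Fin l ⊕ Fin k)) :
    freeNorm (conjGen i p) ≤ 2 * freeNorm p + 1 := by
  have h₁ := freeNorm_mul_le ((tuWord r p)⁻¹ * ga r l k i) (tuWord r p)
  have h₂ := freeNorm_mul_le (tuWord r p)⁻¹ (ga r l k i)
  have h₃ : freeNorm (ga r l k i) = 1 := freeNorm_of _
  have h₄ : freeNorm (tuWord r p) ≤ freeNorm p := freeNorm_map_le _ _
  rw [freeNorm_inv] at h₂
  rw [conjGen]
  omega

theorem approxEq_conjGen {R : Set (FreeGroup (Fin r ⊕ Fin l ⊕ Fin k))} {N : ℕ}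
    {p q : FreeGroup (Fin l ⊕ Fin k)} (h : ApproxEq R N (tuWord r p) (tuWord r q)) (i : Fin r) :
    ApproxEq R (2 * N) (conjGen i p) (conjGen i q) :=
  ((h.inv.mul_right _).mul h).mono (two_mul N).ge

/-- The letter `t_j` paired with `u_j`. -/
def tLetter (hkl : k ≤ l) (j : Fin k) : FreeGroup (Fin l ⊕ Fin k) :=
  FreeGroup.of (Sum.inl (Fin.castLE hkl j))

@[simp]
theorem freeNorm_tLetter (j : Fin k) : freeNorm (tLetter hkl j) = 1 := freeNorm_of _

@[simp]
theorem expSum_tLetter_inr (j j' : Fin k) : expSum (tLetter hkl j) (Sum.inr j') = 0 :=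
  expSum_of_ne (by simp)

@[simp]
theorem expSum_tLetter_inl (j j' : Fin k) :
    expSum (tLetter hkl j) (Sum.inl (Fin.castLE hkl j')) = if j = j' then 1 else 0 := by
  simp [tLetter, expSum_of, Fin.ext_iff]

/-- The order of each letter in the group `W_F` modulo the `a_i`, with `0` for infinite order. -/
def letterOrder (k : ℕ) (m : Fin l → ℕ) : Fin l ⊕ Fin k → ℕ :=
  Sum.elim (fun s => if (s : ℕ) < k then 0 else m s) fun _ => 0

theorem approxCommute_of_inr (y y' : Fin l ⊕ Fin k) :
    ApproxCommute ℛ 1 (FreeGroup.of (Sum.inr y)) (FreeGroup.of (Sum.inr y')) := by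
  rcases y with s | s <;> rcases y' with s' | s'
  · exact approxCommute_iff_areaLe_pcomm.2 (.of_mem (.inr (.inr (.inl ⟨s, s', rfl⟩))))
  · exact approxCommute_iff_areaLe_pcomm.2 (.of_mem (.inr (.inr (.inr (.inl ⟨s, s', rfl⟩)))))
  · exact .symm (approxCommute_iff_areaLe_pcomm.2
      (.of_mem (.inr (.inr (.inr (.inl ⟨s', s, rfl⟩))))))
  · exact approxCommute_iff_areaLe_pcomm.2 (.of_mem (.inr (.inl ⟨s, s', rfl⟩)))

theorem areaLe_of_inr_pow_letterOrder (y : Fin l ⊕ Fin k) :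
    AreaLe ℛ (FreeGroup.of (Sum.inr y) ^ letterOrder k m y) 1 := by
  rcases y with s | s
  · by_cases h : (s : ℕ) < k
    · simpa [letterOrder, h] using AreaLe.one _ _
    · simpa [letterOrder, h] using AreaLe.of_mem (.inl ⟨s, not_lt.1 h, rfl⟩)
  · simpa [letterOrder] using AreaLe.one _ _

theorem areaLe_tuWord {p : FreeGroup (Fin l ⊕ Fin k)} {n : ℕ} (hn : freeNorm p ≤ n)
    (hp : ∀ y, (letterOrder k m y : ℤ) ∣ expSum p y) :
    AreaLe ℛ (tuWord r p) ((l + k + 2) ^ 2 * n ^ 2) := by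
  have h := areaLe_lift_of_dvd_expSum (R := ℛ) approxCommute_of_inr
    areaLe_of_inr_pow_letterOrder p hp
  rw [← tuWord_eq_lift, Fintype.card_sum, Fintype.card_fin, Fintype.card_fin, mul_one] at h
  exact h.mono (by gcongr)

theorem approxEq_tuWord {p q : FreeGroup (Fin l ⊕ Fin k)} {n : ℕ}
    (hn : freeNorm p + freeNorm q ≤ n)
    (hpq : ∀ y, (letterOrder k m y : ℤ) ∣ expSum p y - expSum q y) :
    ApproxEq ℛ ((l + k + 2) ^ 2 * n ^ 2) (tuWord r p) (tuWord r q) := by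
  have h := areaLe_tuWord (r := r) (hkl := hkl) (d := d) (c := c) (p := p * q⁻¹) (n := n)
    ((freeNorm_mul_le _ _).trans (by simpa using hn)) (by simpa [sub_eq_add_neg] using hpq)
  rwa [map_mul, map_inv] at h

theorem prod_conj_zpow_eq_lift_powProd (i : Fin r) (j : Fin k) :
    (List.ofFn fun s : Fin (d j + 1) => gt r l k (Fin.castLE hkl j) ^ (-(s : ℤ)) *
      ga r l k i ^ c j s * gt r l k (Fin.castLE hkl j) ^ ((s : ℕ) : ℤ)).prod =
    FreeGroup.lift (fun s : Fin (d j + 1) => conjGen i (tLetter hkl j ^ (s : ℕ)))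
      (powProd (List.finRange (d j + 1)) fun s => c j s) := by
  have ht : tuWord r (tLetter hkl j) = gt r l k (Fin.castLE hkl j) := FreeGroup.map.of
  rw [List.ofFn_eq_map, powProd, map_list_prod, List.map_map]
  simp [comp_def, conjGen_zpow, ht]

theorem approxEq_conjGen_of_inr_mul (i : Fin r) (j : Fin k) (p : FreeGroup (Fin l ⊕ Fin k)) :
    ApproxEq ℛ 1 (conjGen i (FreeGroup.of (Sum.inr j) * p))
      (FreeGroup.lift (fun s : Fin (d j + 1) => conjGen i (tLetter hkl j ^ (s : ℕ) * p))
        (powProd (List.finRange (d j + 1)) fun s => c j s)) := by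
  have hrel : ApproxEq ℛ 1 (conjGen i (FreeGroup.of (Sum.inr j)))
      (FreeGroup.lift (fun s : Fin (d j + 1) => conjGen i (tLetter hkl j ^ (s : ℕ)))
        (powProd (List.finRange (d j + 1)) fun s => c j s)) := by
    have h := AreaLe.of_mem (R := ℛ) (.inr (.inr (.inr (.inr (.inr (.inr ⟨i, j, rfl⟩))))))
    have h' := (approxEq_one_iff.2 h).mul_left ((gu r l k j)⁻¹ * ga r l k i * gu r l k j)
    rw [mul_one, mul_inv_cancel_left, prod_conj_zpow_eq_lift_powProd] at h'
    exact h'.symm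
  have hconj : (MulAut.conj (tuWord r p)⁻¹).toMonoidHom.comp
      (FreeGroup.lift fun s : Fin (d j + 1) => conjGen i (tLetter hkl j ^ (s : ℕ))) =
      FreeGroup.lift fun s : Fin (d j + 1) => conjGen i (tLetter hkl j ^ (s : ℕ) * p) :=
    FreeGroup.ext_hom _ _ fun s => by simp [← conj_conjGen]
  have h := hrel.conj (tuWord r p)
  rw [conj_conjGen] at h
  rw [← hconj]
  simpa using h

theorem exists_approxEq_conjGen_mul_lift {L : ℕ} {j : Fin k} (hc0 : c j 0 = 1)
    (hL : ∑ s : Fin (d j + 1), (c j s).natAbs ≤ L) (i : Fin r) :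
    ∃ v : FreeGroup (Fin (d j)), freeNorm v ≤ L ∧ ∀ p : FreeGroup (Fin l ⊕ Fin k),
      ApproxEq ℛ 1 (conjGen i (FreeGroup.of (Sum.inr j) * p)) (conjGen i p *
        FreeGroup.lift (fun s : Fin (d j) => conjGen i (tLetter hkl j ^ (s + 1 : ℕ) * p)) v) := by
  refine ⟨_, (freeNorm_powProd_finRange_le _ ((fun s : Fin (d j + 1) => c j s) ∘ Fin.succ)).trans
    (le_trans ?_ hL), fun p => ?_⟩
  · rw [Fin.sum_univ_succ]
    exact Nat.le_add_left _ _
  · have h := approxEq_conjGen_of_inr_mul (hkl := hkl) (m := m) (d := d) (c := c) i j p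
    rw [lift_powProd_finRange_succ (by simpa using hc0)] at h
    simpa [comp_def] using h

theorem exists_approxEq_lift_mul_conjGen {L : ℕ} {j : Fin k} (hcd : c j (d j) = 1)
    (hL : ∑ s : Fin (d j + 1), (c j s).natAbs ≤ L) (i : Fin r) :
    ∃ v : FreeGroup (Fin (d j)), freeNorm v ≤ L ∧ ∀ p : FreeGroup (Fin l ⊕ Fin k),
      ApproxEq ℛ 1 (conjGen i (FreeGroup.of (Sum.inr j) * p))
        (FreeGroup.lift (fun s : Fin (d j) => conjGen i (tLetter hkl j ^ (s : ℕ) * p)) v *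
          conjGen i (tLetter hkl j ^ d j * p)) := by
  refine ⟨_, (freeNorm_powProd_finRange_le _
    ((fun s : Fin (d j + 1) => c j s) ∘ Fin.castSucc)).trans (le_trans ?_ hL), fun p => ?_⟩
  · rw [Fin.sum_univ_castSucc]
    exact Nat.le_add_right _ _
  · have h := approxEq_conjGen_of_inr_mul (hkl := hkl) (m := m) (d := d) (c := c) i j p
    rw [lift_powProd_finRange_succ_last (by simpa using hcd)] at h
    simpa [comp_def] using h

/-- The commutators `[a_i, a_{i'} ^ p]` have area at most `N` for all words `p` of length at most
`X` in the letters `t`, `u` whose exponent sum is `0` in each `u_j` and at most `D j` in absolute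
value in the letter `t_j` paired with `u_j`. -/
def CommutatorBound (r : ℕ) {l k : ℕ} (hkl : k ≤ l) (m : Fin l → ℕ) (d : Fin k → ℕ)
    (c : Fin k → ℕ → ℤ) (D : Fin k → ℕ) (X N : ℕ) : Prop :=
  ∀ (i i' : Fin r) (p : FreeGroup (Fin l ⊕ Fin k)), freeNorm p ≤ X →
    (∀ j, expSum p (Sum.inr j) = 0) →
    (∀ j, |expSum p (Sum.inl (Fin.castLE hkl j))| ≤ D j) →
    ApproxCommute (WFRel r l k hkl m d c) N (ga r l k i) (conjGen i' p)

theorem CommutatorBound.conjGen {D : Fin k → ℕ} {X N : ℕ} (h : CommutatorBound r hkl m d c D X N)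
    (i i' : Fin r) {p q : FreeGroup (Fin l ⊕ Fin k)} (hX : freeNorm p + freeNorm q ≤ X)
    (hu : ∀ j, expSum p (Sum.inr j) = expSum q (Sum.inr j))
    (ht : ∀ j, |expSum q (Sum.inl (Fin.castLE hkl j)) - expSum p (Sum.inl (Fin.castLE hkl j))| ≤
      D j) :
    ApproxCommute ℛ N (conjGen i p) (conjGen i' q) := by
  have hnorm : freeNorm (q * p⁻¹) ≤ X := by
    refine (freeNorm_mul_le q p⁻¹).trans ?_
    rwa [freeNorm_inv, add_comm]
  have h' := (h i i' (q * p⁻¹) hnorm (fun j => by simp [hu])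
    (fun j => by simpa [sub_eq_add_neg] using ht j)).conj (tuWord r p)
  rwa [conj_conjGen, inv_mul_cancel_right, ← conjGen_one, conj_conjGen, one_mul] at h'

/-- The word `t₁^{α₁} ⋯ t_l^{α_l}` over the letters `t`, `u`. -/
def tPowers (k : ℕ) (α : Fin l → ℕ) : FreeGroup (Fin l ⊕ Fin k) :=
  powProd ((List.finRange l).map Sum.inl) (Sum.elim (fun s => (α s : ℤ)) 0)

theorem tuWord_tPowers (α : Fin l → ℕ) : tuWord r (tPowers k α) = tw r l k α := by
  simp only [tw, tPowers, powProd, tuWord, map_list_prod, List.map_map, List.ofFn_eq_map]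
  congr 1
  exact List.map_congr_left fun s _ => by simp [gt]

theorem freeNorm_tPowers_le (α : Fin l → ℕ) : freeNorm (tPowers k α) ≤ ∑ s, α s := by
  refine (freeNorm_powProd_le _ _).trans_eq ?_
  simp [← List.sum_ofFn, List.ofFn_eq_map, comp_def]

@[simp]
theorem expSum_tPowers_inl (α : Fin l → ℕ) (s : Fin l) :
    expSum (tPowers k α) (Sum.inl s) = α s :=
  expSum_powProd_of_mem ((List.nodup_finRange l).map Sum.inl_injective) (by simp) _

@[simp]
theorem expSum_tPowers_inr (α : Fin l → ℕ) (j : Fin k) :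
    expSum (tPowers k α) (Sum.inr j) = 0 :=
  expSum_powProd_of_notMem (by simp) _

theorem sum_le_of_adm {α : Fin l → ℕ} (h : Adm l k m d α) :
    ∑ s, α s ≤ l * (∑ s, m s + ∑ j, d j) := by
  have hle : ∀ s ∈ Finset.univ, α s ≤ ∑ s, m s + ∑ j, d j := fun s _ => by
    by_cases hs : (s : ℕ) < k
    · exact (h.1 s hs).trans ((Finset.single_le_sum_of_canonicallyOrdered (f := d)
        (Finset.mem_univ _)).trans (Nat.le_add_left _ _))
    · exact (h.2 s (not_lt.1 hs)).le.trans ((Finset.single_le_sum_of_canonicallyOrdered (f := m)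
        (Finset.mem_univ s)).trans (Nat.le_add_right _ _))
  simpa using Finset.sum_le_card_nsmul _ _ _ hle

-- `α` collects the negative exponents of `p` and `β` the positive ones, with the exponents of the
-- letters of finite order reduced into `[0, m_s)`.
theorem exists_adm_sub (hm : ∀ s : Fin l, k ≤ (s : ℕ) → 1 ≤ m s) {e : Fin l → ℤ}
    (he : ∀ j, |e (Fin.castLE hkl j)| ≤ d j) :
    ∃ α β : Fin l → ℕ, Adm l k m d α ∧ Adm l k m d β ∧
      ∀ s, (letterOrder k m (Sum.inl s) : ℤ) ∣ e s - (β s - α s) := by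
  refine ⟨fun s => if (s : ℕ) < k then (-e s).toNat else 0,
    fun s => if (s : ℕ) < k then (e s).toNat else (e s % m s).toNat,
    ⟨fun s hs => ?_, fun s hs => ?_⟩, ⟨fun s hs => ?_, fun s hs => ?_⟩, fun s => ?_⟩
  · have := abs_le.1 (he ⟨s, hs⟩)
    simp only [Fin.castLE_mk, Fin.eta] at this
    simp only [hs, if_true]
    omega
  · simpa [not_lt.2 hs, Nat.pos_iff_ne_zero, Nat.one_le_iff_ne_zero] using hm s hs
  · have := abs_le.1 (he ⟨s, hs⟩)
    simp only [Fin.castLE_mk, Fin.eta] at this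
    simp only [hs, if_true]
    omega
  · have := Int.emod_lt_of_pos (e s) (b := m s) (by exact_mod_cast hm s hs)
    simp only [not_lt.2 hs, if_false]
    have := hm s hs
    omega
  · by_cases hs : (s : ℕ) < k
    · simp [letterOrder, hs]
    · have hpos : (m s : ℤ) ≠ 0 := by exact_mod_cast Nat.one_le_iff_ne_zero.1 (hm s (not_lt.1 hs))
      simp [letterOrder, hs, Int.emod_nonneg _ hpos, Int.dvd_self_sub_emod]

theorem commutatorBound_self (hm : ∀ s : Fin l, k ≤ (s : ℕ) → 1 ≤ m s) (X : ℕ) :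
    CommutatorBound r hkl m d c d X
      (1 + 4 * ((l + k + 2) ^ 2 * (X + 2 * (l * (∑ s, m s + ∑ j, d j))) ^ 2)) := by
  intro i i' p hX hu ht
  obtain ⟨α, β, hα, hβ, hdvd⟩ :=
    exists_adm_sub (e := fun s => expSum p (Sum.inl s)) hm ht
  set q := tPowers k β * (tPowers k α)⁻¹ with hq
  have hcomm : ApproxCommute ℛ 1 (ga r l k i) (conjGen i' q) := by
    have h := (approxCommute_iff_areaLe_pcomm.2 (AreaLe.of_mem (R := ℛ)
      (.inr (.inr (.inr (.inr (.inr (.inl ⟨i, i', α, β, hα, hβ, rfl⟩)))))))).conj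
      (tuWord r (tPowers k α)⁻¹)
    simp only [← tuWord_tPowers] at h
    simpa [conjGen, hq, mul_assoc] using h
  have hnorm : freeNorm p + freeNorm q ≤ X + 2 * (l * (∑ s, m s + ∑ j, d j)) := by
    have h₁ := freeNorm_mul_le (tPowers k β) (tPowers k α)⁻¹
    have h₂ := (freeNorm_tPowers_le (k := k) α).trans (sum_le_of_adm hα)
    have h₃ := (freeNorm_tPowers_le (k := k) β).trans (sum_le_of_adm hβ)
    rw [freeNorm_inv, ← hq] at h₁
    omega
  have hpq : ApproxEq ℛ _ (tuWord r p) (tuWord r q) := approxEq_tuWord hnorm <| by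
    rintro (s | j)
    · simpa [hq, sub_eq_add_neg, add_comm, add_left_comm] using hdvd s
    · simp [hq, hu]
  exact (hcomm.of_approxEq (ApproxEq.of_eq _ 0 rfl) (approxEq_conjGen hpq i')).mono (by omega)

namespace CommutatorBound

variable {D : Fin k → ℕ} {X N L : ℕ} {j : Fin k} {p : FreeGroup (Fin l ⊕ Fin k)}

theorem approxCommute_conjGen_tLetter_pow
    (h : CommutatorBound r hkl m d c D (X + (3 * d j + 2)) N) (hD : d j ≤ D j)
    (hX : freeNorm p ≤ X) (hu : ∀ j', expSum p (Sum.inr j') = 0)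
    (ht : ∀ j' ≠ j, |expSum p (Sum.inl (Fin.castLE hkl j'))| ≤ D j')
    (hj : expSum p (Sum.inl (Fin.castLE hkl j)) = D j + 1) (i i' : Fin r)
    {s s' : ℕ} (hs : s ≤ d j) (hs' : s' ≤ d j) (hss' : s' < d j + s) :
    ApproxCommute ℛ N (WF.conjGen i (tLetter hkl j ^ s))
      (WF.conjGen i' (tLetter hkl j ^ s' * ((tLetter hkl j ^ d j)⁻¹ * p))) := by
  refine h.conjGen i i' ?_ (fun j' => by simp [hu]) fun j' => ?_
  · have h₁ := freeNorm_pow_le (tLetter hkl j) s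
    have h₂ := freeNorm_pow_le (tLetter hkl j) s'
    have h₃ := freeNorm_pow_le (tLetter hkl j) (d j)
    have h₄ := freeNorm_mul_le (tLetter hkl j ^ s') ((tLetter hkl j ^ d j)⁻¹ * p)
    have h₅ := freeNorm_mul_le (tLetter hkl j ^ d j)⁻¹ p
    rw [freeNorm_inv] at h₅
    rw [freeNorm_tLetter, mul_one] at h₁ h₂ h₃
    omega
  · rcases eq_or_ne j' j with rfl | hne
    · simp only [expSum_mul, expSum_inv, expSum_pow, expSum_tLetter_inl, hj, if_true, abs_le]
      omega
    · simpa [hne.symm] using ht j' hne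

theorem approxCommute_conjGen_of_inr
    (h : CommutatorBound r hkl m d c D (X + (3 * d j + 2)) N) (hdj : 1 ≤ d j) (hD : d j ≤ D j)
    (hX : freeNorm p ≤ X) (hu : ∀ j', expSum p (Sum.inr j') = 0)
    (ht : ∀ j' ≠ j, |expSum p (Sum.inl (Fin.castLE hkl j'))| ≤ D j')
    (hj : expSum p (Sum.inl (Fin.castLE hkl j)) = D j + 1) (i i' : Fin r) :
    ApproxCommute ℛ N (WF.conjGen i (FreeGroup.of (Sum.inr j)))
      (WF.conjGen i' (FreeGroup.of (Sum.inr j) * ((tLetter hkl j ^ d j)⁻¹ * p))) := by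
  refine h.conjGen i i' ?_ (fun j' => by simp [hu]) fun j' => ?_
  · have h₁ := freeNorm_pow_le (tLetter hkl j) (d j)
    have h₂ := freeNorm_mul_le (FreeGroup.of (Sum.inr j)) ((tLetter hkl j ^ d j)⁻¹ * p)
    have h₃ := freeNorm_mul_le (tLetter hkl j ^ d j)⁻¹ p
    rw [freeNorm_inv] at h₃
    rw [freeNorm_tLetter, mul_one] at h₁
    simp only [freeNorm_of] at h₂ ⊢
    omega
  · simp only [expSum_mul, expSum_inv, expSum_pow, expSum_tLetter_inl, add_sub_cancel_left]
    rcases eq_or_ne j' j with rfl | hne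
    · rw [hj, if_pos rfl, abs_le]
      omega
    · simpa [hne.symm] using ht j' hne

-- Conjugating `[a, a' ^ q] ≈ 1` by `u_j` and expanding `a ^ {u_j}` and `a' ^ {u_j q}` into the
-- conjugates by `t_j ^ s`, all the commutators of the factors are known to be cheap except the
-- extreme one, `[a, a' ^ {t_j ^ d q}]`, which is therefore cheap as well.
theorem approxCommute_of_expSum_eq_succ {L : ℕ} (hdj : 1 ≤ d j) (hc0 : c j 0 = 1)
    (hcd : c j (d j) = 1) (hL : ∑ s : Fin (d j + 1), (c j s).natAbs ≤ L)
    (h : CommutatorBound r hkl m d c D (X + (3 * d j + 2)) N) (hD : d j ≤ D j) (hN : 1 ≤ N)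
    (hX : freeNorm p ≤ X) (hu : ∀ j', expSum p (Sum.inr j') = 0)
    (ht : ∀ j' ≠ j, |expSum p (Sum.inl (Fin.castLE hkl j'))| ≤ D j')
    (hj : expSum p (Sum.inl (Fin.castLE hkl j)) = D j + 1) (i i' : Fin r) :
    ApproxCommute ℛ ((L + 3) ^ 2 * N) (ga r l k i) (WF.conjGen i' p) := by
  have hcomm := fun s s' => h.approxCommute_conjGen_tLetter_pow hD hX hu ht hj i i' (s := s)
    (s' := s')
  obtain ⟨v, hvL, hv⟩ := exists_approxEq_conjGen_mul_lift (m := m) (hkl := hkl) hc0 hL i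
  obtain ⟨w, hwL, hw⟩ := exists_approxEq_lift_mul_conjGen (m := m) (hkl := hkl) hcd hL i'
  have hv := hv 1
  have hw := hw ((tLetter hkl j ^ d j)⁻¹ * p)
  simp only [mul_one, conjGen_one] at hv
  rw [mul_inv_cancel_left] at hw
  have hvw := ApproxCommute.of_approxEq
    (h.approxCommute_conjGen_of_inr hdj hD hX hu ht hj i i') hv.symm hw.symm
  have h₁ := ApproxCommute.lift_lift (R := ℛ) (N := N)
    (fun s s' : Fin (d j) => hcomm (s + 1) s' (by omega) (by omega) (by omega)) v w
  have h₂ := ApproxCommute.lift_right (R := ℛ) (N := N) (fun s : Fin (d j) =>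
    (by simpa using hcomm (s + 1) (d j) (by omega) le_rfl (by omega) :
      ApproxCommute _ _ _ (WF.conjGen i' p)).symm) v
  have h₃ := ApproxCommute.lift_right (R := ℛ) (N := N) (fun s : Fin (d j) =>
    (by simpa using hcomm 0 s (by omega) (by omega) (by omega) :
      ApproxCommute _ _ (ga r l k i) _)) w
  have h₀ : N + 2 * 1 + 2 * 1 ≤ 5 * N := by omega
  refine (hvw.of_mul_mul h₁ h₂.symm h₃).mono ?_
  calc N + 2 * 1 + 2 * 1 + freeNorm v * (freeNorm w * N) + freeNorm v * N + freeNorm w * N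
      ≤ 5 * N + L * (L * N) + L * N + L * N := by gcongr
    _ ≤ (L + 3) ^ 2 * N := by ring_nf; omega

theorem anti {Y : ℕ} (h : CommutatorBound r hkl m d c D Y N) (hXY : X ≤ Y) :
    CommutatorBound r hkl m d c D X N :=
  fun i i' p hX => h i i' p (hX.trans hXY)

theorem add_single (hdj : 1 ≤ d j) (hc0 : c j 0 = 1) (hcd : c j (d j) = 1)
    (hL : ∑ s : Fin (d j + 1), (c j s).natAbs ≤ L)
    (h : CommutatorBound r hkl m d c D (X + (3 * d j + 2)) N) (hD : d j ≤ D j) (hN : 1 ≤ N) :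
    CommutatorBound r hkl m d c (D + Pi.single j 1) X ((L + 3) ^ 2 * N) := by
  intro i i' p hX hu ht
  have hsucc {i i'} {p : FreeGroup (Fin l ⊕ Fin k)} :=
    h.approxCommute_of_expSum_eq_succ (p := p) hdj hc0 hcd hL hD hN (i := i) (i' := i')
  have ht' : ∀ j' ≠ j, |expSum p (Sum.inl (Fin.castLE hkl j'))| ≤ D j' := fun j' hj' => by
    simpa [hj'] using ht j'
  have htj : |expSum p (Sum.inl (Fin.castLE hkl j))| ≤ D j + 1 := by simpa using ht j
  rcases htj.lt_or_eq with hlt | heq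
  · refine (h i i' p (by omega) hu fun j' => ?_).mono (Nat.le_mul_of_pos_left N (by positivity))
    by_cases hj' : j' = j
    · exact hj' ▸ Int.lt_add_one_iff.1 hlt
    · exact ht' j' hj'
  rcases eq_or_eq_neg_of_abs_eq heq with hpos | hneg
  · exact hsucc hX hu ht' hpos
  · have h' : ApproxCommute ℛ _ (ga r l k i') (WF.conjGen i p⁻¹) :=
      hsucc (by simpa using hX) (by simpa using hu) (by simpa using ht') (by simp [hneg])
    have h'' := h'.conj (tuWord r p)
    rw [conj_conjGen, inv_mul_cancel, conjGen_one, ← conjGen_one, conj_conjGen, one_mul] at h''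
    exact h''.symm

theorem add_count {e : ℕ} (hd : ∀ j, 1 ≤ d j) (hc0 : ∀ j, c j 0 = 1) (hcd : ∀ j, c j (d j) = 1)
    (hL : ∀ j, ∑ s : Fin (d j + 1), (c j s).natAbs ≤ L) (he : ∀ j, d j ≤ e) {B : ℕ → ℕ}
    (hB : ∀ X, 1 ≤ B X) (h : ∀ X, CommutatorBound r hkl m d c d X (B X)) (js : List (Fin k))
    (X : ℕ) :
    CommutatorBound r hkl m d c (d + fun j => js.count j) X
      (((L + 3) ^ 2) ^ js.length * B (X + js.length * (3 * e + 2))) := by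
  induction js generalizing X with
  | nil =>
    have hcount : (d + fun j => ([] : List (Fin k)).count j) = d := by
      ext; simp
    simpa only [hcount, List.length_nil, pow_zero, one_mul, zero_mul, add_zero] using h X
  | cons j js ih =>
    have hcount : (d + fun j' => (j :: js).count j') =
        (d + fun j' => js.count j') + Pi.single j 1 := by
      funext j'
      simp [List.count_cons, Pi.single_apply, add_assoc, eq_comm (a := j)]
    have hX : X + (3 * d j + 2) ≤ X + (3 * e + 2) := by
      have := he j
      omega
    have hstep := add_single (hd j) (hc0 j) (hcd j) (hL j)
      ((ih _).anti hX) (Nat.le_add_right _ _)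
      (Nat.mul_pos (by positivity) (hB _))
    rw [hcount, List.length_cons, pow_succ', mul_assoc]
    convert hstep using 4
    ring

end CommutatorBound

theorem exists_expBounded_approxCommute_conjGen (hm : ∀ s : Fin l, k ≤ (s : ℕ) → 1 ≤ m s)
    (hd : ∀ j, 1 ≤ d j) (hc0 : ∀ j, c j 0 = 1) (hcd : ∀ j, c j (d j) = 1) :
    ∃ A : ℕ → ℕ, ExpBounded A ∧ ∀ (X : ℕ) (i i' : Fin r) (p q : FreeGroup (Fin l ⊕ Fin k)),
      freeNorm p ≤ X → freeNorm q ≤ X → (∀ j, expSum p (Sum.inr j) = 0) →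
      (∀ j, expSum q (Sum.inr j) = 0) → ApproxCommute ℛ (A X) (conjGen i p) (conjGen i' q) := by
  set L := ∑ j, ∑ s : Fin (d j + 1), (c j s).natAbs
  set e := ∑ j, d j
  set B : ℕ → ℕ := fun X => 1 + 4 * ((l + k + 2) ^ 2 * (X + 2 * (l * (∑ s, m s + ∑ j, d j))) ^ 2)
  set js : ℕ → List (Fin k) := fun X => (List.replicate (2 * X) (List.finRange k)).flatten
  have hlen (X : ℕ) : (js X).length = 2 * X * k := by simp [js]
  have hBexp : ExpBounded B :=
    .add (.const 1) (.mul (.const 4) (.mul (.const _) ((ExpBounded.id.add (.const _)).pow 2)))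
  have hAexp : ExpBounded fun X =>
      ((L + 3) ^ 2) ^ (js X).length * B (2 * X + (js X).length * (3 * e + 2)) := by
    convert ((ExpBounded.const_pow ((L + 3) ^ 2)).comp_affine (2 * k) 0).mul
      (hBexp.comp_affine (2 + 2 * k * (3 * e + 2)) 0) using 4 <;> rw [hlen] <;> ring
  refine ⟨_, hAexp, fun X i i' p q hp hq hpu hqu => ?_⟩
  have h := CommutatorBound.add_count (r := r) (hkl := hkl) hd hc0 hcd (L := L) (e := e)
    (fun j => Finset.single_le_sum_of_canonicallyOrdered (Finset.mem_univ j)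
      (f := fun j => ∑ s : Fin (d j + 1), (c j s).natAbs))
    (fun j => Finset.single_le_sum_of_canonicallyOrdered (Finset.mem_univ j))
    (fun _ => Nat.le_add_right _ _) (commutatorBound_self hm)
    (js X) (2 * X)
  refine h.conjGen i i' (by omega) (by simp [hpu, hqu]) fun j => ?_
  have hp' := abs_expSum_le p (Sum.inl (Fin.castLE hkl j))
  have hq' := abs_expSum_le q (Sum.inl (Fin.castLE hkl j))
  have hcount : (js X).count j = 2 * X := by simp [js, List.count_flatten, List.count_finRange]
  refine (abs_sub _ _).trans ?_
  simp only [Pi.add_apply, hcount]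
  push_cast
  omega

/-! ### Balanced forms of words -/

/-- The words of length at most `X` in the letters `t`, `u` with exponent sum `0` in each `u_j`. -/
abbrev BalancedWord (l k X : ℕ) : Type :=
  {p : FreeGroup (Fin l ⊕ Fin k) // freeNorm p ≤ X ∧ ∀ j, expSum p (Sum.inr j) = 0}

/-- A formal product of conjugates `a_i ^ p`, with `p` balanced, as an element of the free group on
the generators of `W_F`. -/
def balancedProd {X : ℕ} :
    FreeGroup (Fin r × BalancedWord l k X) →* FreeGroup (Fin r ⊕ Fin l ⊕ Fin k) :=
  FreeGroup.lift fun z => conjGen z.1 (z.2 : FreeGroup (Fin l ⊕ Fin k))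

/-- At a cost of `N` relators, `w` is a product of at most `N` conjugates `a_i ^ {±p}`, where the
words `p` are balanced and have length at most `X`. -/
def HasBalancedForm (R : Set (FreeGroup (Fin r ⊕ Fin l ⊕ Fin k)))
    (w : FreeGroup (Fin r ⊕ Fin l ⊕ Fin k)) (X N : ℕ) : Prop :=
  ∃ W : FreeGroup (Fin r × BalancedWord l k X), freeNorm W ≤ N ∧ ApproxEq R N w (balancedProd W)

namespace HasBalancedForm

variable {R : Set (FreeGroup (Fin r ⊕ Fin l ⊕ Fin k))} {X N : ℕ}
  {w : FreeGroup (Fin r ⊕ Fin l ⊕ Fin k)}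

theorem mono {X' N' : ℕ} (h : HasBalancedForm R w X N) (hX : X ≤ X') (hN : N ≤ N') :
    HasBalancedForm R w X' N' := by
  obtain ⟨W, hWN, hW⟩ := h
  let incl : BalancedWord l k X → BalancedWord l k X' :=
    Subtype.map id fun p hp => ⟨hp.1.trans hX, hp.2⟩
  have hmap : balancedProd (FreeGroup.map (Prod.map id incl) W) = balancedProd (r := r) W := by
    have hcomp : (balancedProd (r := r)).comp (FreeGroup.map (Prod.map id incl)) = balancedProd :=
      FreeGroup.ext_hom _ _ fun z => by simp [balancedProd, incl]
    exact DFunLike.congr_fun hcomp W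
  exact ⟨_, (freeNorm_map_le _ W).trans (hWN.trans hN), by rw [hmap]; exact hW.mono hN⟩

theorem one (R : Set (FreeGroup (Fin r ⊕ Fin l ⊕ Fin k))) (X N : ℕ) : HasBalancedForm R 1 X N :=
  ⟨1, by simp, ApproxEq.of_eq R N (map_one _).symm⟩

theorem mul {w' : FreeGroup (Fin r ⊕ Fin l ⊕ Fin k)} {N' : ℕ} (h : HasBalancedForm R w X N)
    (h' : HasBalancedForm R w' X N') : HasBalancedForm R (w * w') X (N + N') := by
  obtain ⟨⟨W, hWN, hW⟩, ⟨W', hWN', hW'⟩⟩ := h, h'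
  exact ⟨W * W', (freeNorm_mul_le W W').trans (add_le_add hWN hWN'), by
    rw [map_mul]; exact hW.mul hW'⟩

theorem inv (h : HasBalancedForm R w X N) : HasBalancedForm R w⁻¹ X N := by
  obtain ⟨W, hWN, hW⟩ := h
  exact ⟨W⁻¹, by rwa [freeNorm_inv], by rw [map_inv]; exact hW.inv⟩

theorem lift {ι : Type*} {f : ι → FreeGroup (Fin r ⊕ Fin l ⊕ Fin k)}
    (h : ∀ i, HasBalancedForm R (f i) X N) (v : FreeGroup ι) :
    HasBalancedForm R (FreeGroup.lift f v) X (freeNorm v * N) := by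
  induction v using freeNorm_induction with
  | one => exact one R _ _
  | of_mul i v hv ih =>
    simp only [map_mul, FreeGroup.lift_apply_of, hv, Nat.succ_mul, add_comm _ N]
    exact (h i).mul ih
  | inv_of_mul i v hv ih =>
    simp only [map_mul, map_inv, FreeGroup.lift_apply_of, hv, Nat.succ_mul, add_comm _ N]
    exact (h i).inv.mul ih

theorem of_approxEq {w' : FreeGroup (Fin r ⊕ Fin l ⊕ Fin k)} {M : ℕ}
    (h : HasBalancedForm R w X N) (hw : ApproxEq R M w' w) : HasBalancedForm R w' X (M + N) := by
  obtain ⟨W, hWN, hW⟩ := h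
  exact ⟨W, hWN.trans (Nat.le_add_left N M), hw.trans hW⟩

-- Each factor `u_j` of `p` is traded for a product of at most `L` conjugates by powers of `t_j`.
theorem conjGen {L e : ℕ} (hL : ∀ j, ∑ s : Fin (d j + 1), (c j s).natAbs ≤ L)
    (he : ∀ j, d j ≤ e) (i : Fin r) {M : ℕ} {p : FreeGroup (Fin l ⊕ Fin k)} (hX : freeNorm p ≤ X)
    (hp : ∀ j, 0 ≤ expSum p (Sum.inr j)) (hM : ∑ j, expSum p (Sum.inr j) = M) :
    HasBalancedForm ℛ (WF.conjGen i p) (X + (e + 1) * M) ((L + 1) ^ M) := by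
  induction M generalizing p X with
  | zero =>
    have hp0 := (Finset.sum_eq_zero_iff_of_nonneg fun j _ => hp j).1 hM
    exact ⟨FreeGroup.of (i, ⟨p, by simpa using hX, fun j => hp0 j (Finset.mem_univ j)⟩), by simp,
      ApproxEq.of_eq _ _ (by simp [balancedProd])⟩
  | succ M ih =>
    obtain ⟨j, -, hj⟩ : ∃ j ∈ Finset.univ, 0 < expSum p (Sum.inr j) :=
      Finset.exists_lt_of_sum_lt (f := 0) (by simp [hM])
    have hform (s : Fin (d j + 1)) : HasBalancedForm ℛ
        (WF.conjGen i (tLetter hkl j ^ (s : ℕ) * ((FreeGroup.of (Sum.inr j))⁻¹ * p)))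
        (X + (e + 1) * (M + 1)) ((L + 1) ^ M) := by
      have hexp (j' : Fin k) :
          expSum (tLetter hkl j ^ (s : ℕ) * ((FreeGroup.of (Sum.inr j))⁻¹ * p)) (Sum.inr j') =
            expSum p (Sum.inr j') - if j = j' then 1 else 0 := by
        simp [expSum_of, sub_eq_neg_add]
      refine (ih (X := X + (e + 1)) ?_ (fun j' => ?_) ?_).mono (by ring_nf; rfl) le_rfl
      · have h₁ := freeNorm_mul_le (tLetter hkl j ^ (s : ℕ)) ((FreeGroup.of (Sum.inr j))⁻¹ * p)
        have h₂ := freeNorm_pow_le (tLetter hkl j) s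
        have h₃ := freeNorm_mul_le (FreeGroup.of (Sum.inr j))⁻¹ p
        have h₄ := he j
        simp only [freeNorm_inv, freeNorm_of, freeNorm_tLetter] at h₁ h₂ h₃
        omega
      · rw [hexp]
        have := hp j'
        split_ifs with h
        · subst h; omega
        · omega
      · simp [hexp, hM]
    have hexpand := approxEq_conjGen_of_inr_mul (r := r) (m := m) (hkl := hkl) (d := d) (c := c) i j
      ((FreeGroup.of (Sum.inr j))⁻¹ * p)
    rw [mul_inv_cancel_left] at hexpand
    refine ((HasBalancedForm.lift hform _).of_approxEq hexpand).mono le_rfl ?_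
    calc 1 + freeNorm (powProd (List.finRange (d j + 1)) fun s => c j s) * (L + 1) ^ M
        ≤ (L + 1) ^ M + L * (L + 1) ^ M := by
          gcongr
          · exact Nat.one_le_pow _ _ L.succ_pos
          · exact (freeNorm_powProd_finRange_le _ _).trans (hL j)
      _ = (L + 1) ^ (M + 1) := by ring

end HasBalancedForm

/-- The word in the letters `t`, `u` obtained by erasing the letters `a_i`. -/
def tuPart : FreeGroup (Fin r ⊕ Fin l ⊕ Fin k) →* FreeGroup (Fin l ⊕ Fin k) :=
  FreeGroup.lift (Sum.elim (fun _ => 1) FreeGroup.of)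

theorem freeNorm_tuPart_le (w : FreeGroup (Fin r ⊕ Fin l ⊕ Fin k)) :
    freeNorm (tuPart w) ≤ freeNorm w := by
  simpa [tuPart] using freeNorm_lift_le (C := 1) (f := Sum.elim (fun _ : Fin r => 1) FreeGroup.of)
    (by rintro (i | y) <;> simp) w

theorem expSum_tuPart (w : FreeGroup (Fin r ⊕ Fin l ⊕ Fin k)) (y : Fin l ⊕ Fin k) :
    expSum (tuPart w) y = expSum w (Sum.inr y) := by
  classical
  have hof (x : Fin r ⊕ Fin l ⊕ Fin k) :
      expSum (tuPart (FreeGroup.of x)) y = expSum (FreeGroup.of x) (Sum.inr y) := by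
    rcases x with i | z <;> simp [tuPart, expSum_of]
  induction w using freeNorm_induction with
  | one => simp
  | of_mul x w _ ih => simp [hof, ih]
  | inv_of_mul x w _ ih => simp [hof, ih]

-- A letter `a_i` of `w` contributes its conjugate by the letters `t`, `u` that precede it.
theorem HasBalancedForm.of_forall_conjGen {R : Set (FreeGroup (Fin r ⊕ Fin l ⊕ Fin k))} {X N : ℕ}
    {w : FreeGroup (Fin r ⊕ Fin l ⊕ Fin k)} {q : FreeGroup (Fin l ⊕ Fin k)}
    (h : ∀ i p, freeNorm p ≤ freeNorm w → HasBalancedForm R (WF.conjGen i (p * q)) X N) :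
    HasBalancedForm R ((tuWord r q)⁻¹ * (w * (tuWord r (tuPart w))⁻¹) * tuWord r q) X
      (freeNorm w * N) := by
  induction w using freeNorm_induction generalizing q with
  | one => simpa using one R X _
  | of_mul x w hw ih =>
    rw [hw, Nat.succ_mul, add_comm]
    rcases x with i | y
    · have h₁ := (h i 1 (by simp)).mul (ih fun i p hp => h i p (by omega))
      simpa [WF.conjGen, ga, tuPart, mul_assoc] using h₁
    · have h₁ := ih (q := (FreeGroup.of y)⁻¹ * q) fun i p hp => by
        rw [← mul_assoc]
        refine h i _ (hw ▸ (freeNorm_mul_le _ _).trans ?_)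
        simpa using hp
      refine HasBalancedForm.mono ?_ le_rfl (Nat.le_add_left _ _)
      simpa [tuWord, tuPart, mul_assoc] using h₁
  | inv_of_mul x w hw ih =>
    rw [hw, Nat.succ_mul, add_comm]
    rcases x with i | y
    · have h₁ := (h i 1 (by simp)).inv.mul (ih fun i p hp => h i p (by omega))
      simpa [WF.conjGen, ga, tuPart, mul_assoc] using h₁
    · have h₁ := ih (q := FreeGroup.of y * q) fun i p hp => by
        rw [← mul_assoc]
        refine h i _ (hw ▸ (freeNorm_mul_le _ _).trans ?_)
        simpa using hp
      refine HasBalancedForm.mono ?_ le_rfl (Nat.le_add_left _ _)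
      simpa [tuWord, tuPart, mul_assoc] using h₁

variable (r hkl m d c) in
-- After conjugation by `(u_1 ⋯ u_k) ^ n` all exponents of the letters `u_j` are nonnegative.
theorem exists_expBounded_hasBalancedForm :
    ∃ (a : ℕ) (B : ℕ → ℕ), ExpBounded B ∧ ∀ n, ∃ q : FreeGroup (Fin l ⊕ Fin k),
      ∀ w : FreeGroup (Fin r ⊕ Fin l ⊕ Fin k), freeNorm w ≤ n →
        HasBalancedForm ℛ ((tuWord r q)⁻¹ * (w * (tuWord r (tuPart w))⁻¹) * tuWord r q)
          (a * n) (B n) := by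
  set L := ∑ j, ∑ s : Fin (d j + 1), (c j s).natAbs
  have hL (j : Fin k) : ∑ s : Fin (d j + 1), (c j s).natAbs ≤ L :=
    Finset.single_le_sum (f := fun j => ∑ s : Fin (d j + 1), (c j s).natAbs)
      (fun _ _ => Nat.zero_le _) (Finset.mem_univ j)
  have he (j : Fin k) : d j ≤ ∑ j, d j :=
    Finset.single_le_sum (fun _ _ => Nat.zero_le _) (Finset.mem_univ j)
  set e := ∑ j, d j
  refine ⟨1 + k + (e + 1) * (2 * k), fun n => n * (L + 1) ^ (2 * k * n + 0),
    ExpBounded.id.mul ((ExpBounded.const_pow _).comp_affine _ _), fun n => ?_⟩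
  set q : FreeGroup (Fin l ⊕ Fin k) := powProd ((List.finRange k).map Sum.inr) fun _ => (n : ℤ)
  have hq (j : Fin k) : expSum q (Sum.inr j) = n :=
    expSum_powProd_of_mem ((List.nodup_finRange k).map Sum.inr_injective) (by simp) _
  have hqnorm : freeNorm q ≤ k * n := (freeNorm_powProd_le _ _).trans (by simp [comp_def])
  refine ⟨q, fun w hw => (HasBalancedForm.of_forall_conjGen fun i p hp => ?_).mono le_rfl
    (Nat.mul_le_mul_right _ hw)⟩
  have hexp (j : Fin k) : |expSum p (Sum.inr j)| ≤ n :=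
    (abs_expSum_le p _).trans (by exact_mod_cast hp.trans hw)
  have hnonneg (j : Fin k) : 0 ≤ expSum (p * q) (Sum.inr j) := by
    have := abs_le.1 (hexp j)
    rw [expSum_mul, hq]
    omega
  obtain ⟨M, hM⟩ := Int.eq_ofNat_of_zero_le (Finset.sum_nonneg fun j _ => hnonneg j)
  have hMle : M ≤ 2 * k * n := by
    have hsum : ∑ j, expSum (p * q) (Sum.inr j) ≤ ∑ _j : Fin k, 2 * (n : ℤ) :=
      Finset.sum_le_sum fun j _ => by
        have := abs_le.1 (hexp j)
        rw [expSum_mul, hq]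
        omega
    rw [hM, Finset.sum_const, Finset.card_fin, nsmul_eq_mul] at hsum
    have : (M : ℤ) ≤ 2 * k * n := by linarith
    exact_mod_cast this
  refine (HasBalancedForm.conjGen hL he i
    ((freeNorm_mul_le p q).trans (add_le_add (hp.trans hw) hqnorm)) hnonneg hM).mono ?_ ?_
  · calc n + k * n + (e + 1) * M ≤ n + k * n + (e + 1) * (2 * k * n) := by gcongr
      _ = (1 + k + (e + 1) * (2 * k)) * n := by ring
  · exact Nat.pow_le_pow_right L.succ_pos hMle

theorem exists_approxCommute_of_expSum_eq_zero (hm : ∀ s : Fin l, k ≤ (s : ℕ) → 1 ≤ m s)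
    (hd : ∀ j, 1 ≤ d j) (hc0 : ∀ j, c j 0 = 1) (hcd : ∀ j, c j (d j) = 1)
    {w w' : FreeGroup (Fin r ⊕ Fin l ⊕ Fin k)} (hw : ∀ y, expSum w (Sum.inr y) = 0)
    (hw' : ∀ y, expSum w' (Sum.inr y) = 0) : ∃ N, ApproxCommute ℛ N w w' := by
  obtain ⟨A, -, hA⟩ := exists_expBounded_approxCommute_conjGen (r := r) (hkl := hkl) hm hd hc0 hcd
  obtain ⟨a, B, -, hB⟩ := exists_expBounded_hasBalancedForm r hkl m d c
  obtain ⟨q, hq⟩ := hB (freeNorm w + freeNorm w')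
  obtain ⟨W, -, hW⟩ := hq w (Nat.le_add_right _ _)
  obtain ⟨W', -, hW'⟩ := hq w' (Nat.le_add_left _ _)
  have hforms := (ApproxCommute.lift_lift (fun z z' => hA _ z.1 z'.1 z.2 z'.2 z.2.2.1 z'.2.2.1
    z.2.2.2 z'.2.2.2) W W').of_approxEq hW hW'
  have hunconj := hforms.conj (tuWord r q)⁻¹
  simp only [mul_assoc, inv_inv, mul_inv_cancel_left, mul_inv_cancel, mul_one] at hunconj
  have htu {v : FreeGroup (Fin r ⊕ Fin l ⊕ Fin k)} (hv : ∀ y, expSum v (Sum.inr y) = 0) :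
      ∃ N, ApproxEq ℛ N v (v * (tuWord r (tuPart v))⁻¹) := by
    have h := areaLe_tuWord (r := r) (hkl := hkl) (m := m) (d := d) (c := c) le_rfl
      fun y => (expSum_tuPart v y).trans (hv y) ▸ dvd_zero _
    exact ⟨_, by simpa using (approxEq_one_iff.2 h.inv).symm.mul_left v⟩
  obtain ⟨⟨M, hM⟩, ⟨M', hM'⟩⟩ := And.intro (htu hw) (htu hw')
  exact ⟨_, hunconj.of_approxEq hM hM'⟩

theorem pcomm_mem_normalClosure_of_expSum_eq_zero (hm : ∀ s : Fin l, k ≤ (s : ℕ) → 1 ≤ m s)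
    (hd : ∀ j, 1 ≤ d j) (hc0 : ∀ j, c j 0 = 1) (hcd : ∀ j, c j (d j) = 1)
    {w w' : FreeGroup (Fin r ⊕ Fin l ⊕ Fin k)} (hw : ∀ y, expSum w (Sum.inr y) = 0)
    (hw' : ∀ y, expSum w' (Sum.inr y) = 0) : pcomm w w' ∈ Subgroup.normalClosure ℛ := by
  obtain ⟨N, hN⟩ := exists_approxCommute_of_expSum_eq_zero hm hd hc0 hcd hw hw'
  exact (approxCommute_iff_areaLe_pcomm.1 hN).mem_normalClosure

theorem isMetabelian_quotient_normalClosure (hm : ∀ s : Fin l, k ≤ (s : ℕ) → 1 ≤ m s)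
    (hd : ∀ j, 1 ≤ d j) (hc0 : ∀ j, c j 0 = 1) (hcd : ∀ j, c j (d j) = 1) :
    IsMetabelian (FreeGroup (Fin r ⊕ Fin l ⊕ Fin k) ⧸ Subgroup.normalClosure ℛ) :=
  isMetabelian_quotient fun _ _ hv hw => pcomm_mem_normalClosure_of_expSum_eq_zero hm hd hc0 hcd
    (fun _ => expSum_eq_zero_of_mem_commutator hv _)
    (fun _ => expSum_eq_zero_of_mem_commutator hw _)

end WF

/-! ### Linear independence of monomials -/

section LinearIndependence

theorem expSum_eq_zero_of_lift_eq_one {X M : Type*} [AddCommGroup M] {v : X → M}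
    (hv : LinearIndependent ℤ v) {w : FreeGroup X}
    (hw : FreeGroup.lift (fun x => Multiplicative.ofAdd (v x)) w = 1) (x : X) :
    expSum w x = 0 := by
  classical
  let φ : FreeGroup X →* Multiplicative (X →₀ ℤ) :=
    FreeGroup.lift fun x => Multiplicative.ofAdd (Finsupp.single x 1)
  have hφ : (AddMonoidHom.toMultiplicative (Finsupp.linearCombination ℤ v).toAddMonoidHom).comp φ =
      FreeGroup.lift fun x => Multiplicative.ofAdd (v x) :=
    FreeGroup.ext_hom _ _ fun x => by simp [φ]
  have hexp : (AddMonoidHom.toMultiplicative (Finsupp.applyAddHom x)).comp φ =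
      FreeGroup.lift fun y => Multiplicative.ofAdd (if y = x then (1 : ℤ) else 0) :=
    FreeGroup.ext_hom _ _ fun y => by simp [φ, Finsupp.single_apply]
  have hzero : (φ w).toAdd = 0 :=
    linearIndependent_iff.1 hv _
      (congrArg Multiplicative.toAdd ((DFunLike.congr_fun hφ w).trans hw))
  have h := congrArg Multiplicative.toAdd (DFunLike.congr_fun hexp w)
  simpa [expSum, hzero] using h.symm

theorem linearIndependent_addMonoidAlgebra_single {R T : Type*} [CommRing R] :
    LinearIndependent R fun t : T => (AddMonoidAlgebra.single t 1 : AddMonoidAlgebra R T) :=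
  .of_comp (AddMonoidAlgebra.coeffLinearEquiv R).toLinearMap
    (Finsupp.linearIndependent_single_one R T)

-- The top-degree coefficients of a product with respect to `π` multiply without cancellation.
theorem sum_single_nsmul_mem_nonZeroDivisors {R T : Type*} [CommRing R] [AddCommGroup T]
    (π : T →+ ℤ) {t : T} (ht : 0 < π t) {n : ℕ} {c : ℕ → R} (hc : c n ∈ nonZeroDivisors R) :
    ∑ s ∈ Finset.range (n + 1), AddMonoidAlgebra.single (s • t) (c s) ∈
      nonZeroDivisors (AddMonoidAlgebra R T) := by
  rw [mem_nonZeroDivisors_iff_left]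
  intro x hx
  by_contra hne
  obtain ⟨a, ha, hmax⟩ := Finset.exists_max_image x.coeff.support π
    (Finsupp.support_nonempty_iff.2 (by simpa using hne))
  have htop := congrArg (fun y => y.coeff (n • t + a)) hx
  simp only [Finset.sum_mul, AddMonoidAlgebra.coeff_sum, Finset.sum_apply',
    AddMonoidAlgebra.coeff_single_mul_apply, AddMonoidAlgebra.coeff_zero,
    Finsupp.zero_apply] at htop
  rw [Finset.sum_range_succ, Finset.sum_eq_zero, zero_add, neg_add_cancel_left] at htop
  · exact Finsupp.mem_support_iff.1 ha (mem_nonZeroDivisors_iff_left.1 hc _ htop)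
  · intro s hs
    by_contra hmem
    have hle := hmax _ (Finsupp.mem_support_iff.2 (right_ne_zero_of_mul hmem))
    have hsn : (s : ℤ) < n := by exact_mod_cast Finset.mem_range.1 hs
    simp only [map_add, map_neg, map_nsmul, nsmul_eq_mul] at hle
    nlinarith

end LinearIndependence

section Monomials

variable {T : Type*} [AddCommGroup T] (K : Type*) [CommRing K] [Algebra (AddMonoidAlgebra ℤ T) K]

/-- The elements of the group `T` as units of an algebra over the group ring of `T`. -/
noncomputable def monomialUnit : Multiplicative T →* Kˣ :=
  MonoidHom.toHomUnits ((algebraMap (AddMonoidAlgebra ℤ T) K : _ →* K).comp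
    (AddMonoidAlgebra.of ℤ T))

theorem val_monomialUnit (t : T) : (monomialUnit K (Multiplicative.ofAdd t) : K) =
    algebraMap (AddMonoidAlgebra ℤ T) K (AddMonoidAlgebra.single t 1) := rfl

variable [IsFractionRing (AddMonoidAlgebra ℤ T) K]

theorem linearIndependent_monomialUnit :
    LinearIndependent ℤ fun t : T => (monomialUnit K (Multiplicative.ofAdd t) : K) :=
  linearIndependent_addMonoidAlgebra_single.map'
    (algebraMap (AddMonoidAlgebra ℤ T) K).toIntAlgHom.toLinearMap
    (LinearMap.ker_eq_bot.2 (IsFractionRing.injective _ _))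

theorem isUnit_sum_monomialUnit_pow (π : T →+ ℤ) {t : T} (ht : 0 < π t) {n : ℕ} {e : ℕ → ℤ}
    (he : e n = 1) : IsUnit (∑ s : Fin (n + 1), (e s : K) *
      (monomialUnit K (Multiplicative.ofAdd t ^ (s : ℕ)) : Kˣ)) := by
  have h := IsLocalization.map_units K (⟨_, sum_single_nsmul_mem_nonZeroDivisors π ht
    (he ▸ one_mem _)⟩ : nonZeroDivisors (AddMonoidAlgebra ℤ T))
  convert h
  rw [map_sum, Finset.sum_range]
  refine Finset.sum_congr rfl fun s _ => ?_
  rw [← ofAdd_nsmul, val_monomialUnit, ← map_intCast (algebraMap (AddMonoidAlgebra ℤ T) K),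
    ← map_mul, ← zsmul_eq_mul, AddMonoidAlgebra.smul_single, smul_eq_mul, mul_one]

end Monomials

/-! ### Affine representations and the upper bound -/

namespace WF

variable {r l k : ℕ} {hkl : k ≤ l} {m : Fin l → ℕ} {d : Fin k → ℕ} {c : Fin k → ℕ → ℤ}

local notation "ℛ" => WFRel r l k hkl m d c

section AffineRepresentation

theorem of_mem_WFRel {P : FreeGroup (Fin r ⊕ Fin l ⊕ Fin k) → Prop}
    (hpow : ∀ y : Fin l ⊕ Fin k, P (FreeGroup.of (Sum.inr y) ^ letterOrder k m y))
    (hcomm : ∀ y y' : Fin l ⊕ Fin k,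
      P (pcomm (FreeGroup.of (Sum.inr y)) (FreeGroup.of (Sum.inr y'))))
    (hconj : ∀ (i i' : Fin r) (p q : FreeGroup (Fin l ⊕ Fin k)),
      P (pcomm (conjGen i p) (conjGen i' q)))
    (hu : ∀ (i : Fin r) (j : Fin k), P ((conjGen i (FreeGroup.of (Sum.inr j)))⁻¹ *
      FreeGroup.lift (fun s : Fin (d j + 1) => conjGen i (tLetter hkl j ^ (s : ℕ)))
        (powProd (List.finRange (d j + 1)) fun s => c j s)))
    {w : FreeGroup (Fin r ⊕ Fin l ⊕ Fin k)} (hw : w ∈ ℛ) : P w := by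
  rcases hw with ⟨s, hs, rfl⟩ | ⟨j, j', rfl⟩ | ⟨s, s', rfl⟩ | ⟨s, j, rfl⟩ | ⟨i, i', rfl⟩ |
    ⟨i, i', α, β, -, -, rfl⟩ | ⟨i, j, rfl⟩
  · simpa [letterOrder, gt, not_lt.2 hs] using hpow (Sum.inl s)
  · exact hcomm (Sum.inr j) (Sum.inr j')
  · exact hcomm (Sum.inl s) (Sum.inl s')
  · exact hcomm (Sum.inl s) (Sum.inr j)
  · simpa using hconj i i' 1 1
  · simp only [← tuWord_tPowers]
    exact hconj i i' _ _
  · rw [prod_conj_zpow_eq_lift_powProd]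
    exact hu i j

theorem letterOrder_dvd_expSum {w : FreeGroup (Fin r ⊕ Fin l ⊕ Fin k)}
    (hw : w ∈ Subgroup.normalClosure ℛ) (y : Fin l ⊕ Fin k) :
    (letterOrder k m y : ℤ) ∣ expSum w (Sum.inr y) := by
  classical
  refine dvd_expSum_of_mem_normalClosure (fun v hv => ?_) hw
  have hconj (i : Fin r) (p : FreeGroup (Fin l ⊕ Fin k)) :
      expSum (conjGen i p) (Sum.inr y) = 0 := by simp [conjGen, ga, expSum_of]
  refine of_mem_WFRel (P := fun v => (letterOrder k m y : ℤ) ∣ expSum v (Sum.inr y))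
    (fun y' => ?_) (fun _ _ => by simp [pcomm]) (fun _ _ _ _ => by simp [pcomm])
    (fun i j => ?_) hv
  · by_cases h : y' = y
    · simp [h]
    · simp [expSum_of, h]
  · simp [hconj, powProd, map_list_prod, expSum_list_prod, comp_def]

variable {S : Type*} [CommRing S]

/-- The units of `S` act on `S ^ r` by scalar multiplication; `S ^ r` is written multiplicatively
to form a semidirect product. -/
def unitsMulAut (r : ℕ) (S : Type*) [CommRing S] : Sˣ →* MulAut (Multiplicative (Fin r → S)) :=
  (MulAutMultiplicative (Fin r → S)).symm.toMonoidHom.comp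
    (DistribMulAction.toAddAut Sˣ (Fin r → S))

/-- The representation by affine maps of `S ^ r` in which `a_i` is the translation by the basis
vector `e_i` and a word `p` in the letters `t`, `u` is the homothety of ratio `(χ p)⁻¹`. -/
def affineRep (r : ℕ) (χ : FreeGroup (Fin l ⊕ Fin k) →* Sˣ) :
    FreeGroup (Fin r ⊕ Fin l ⊕ Fin k) →* Multiplicative (Fin r → S) ⋊[unitsMulAut r S] Sˣ :=
  FreeGroup.lift (Sum.elim
    (fun i => SemidirectProduct.inl (Multiplicative.ofAdd (Pi.single i 1)))
    fun y => SemidirectProduct.inr (χ (FreeGroup.of y))⁻¹)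

variable {χ : FreeGroup (Fin l ⊕ Fin k) →* Sˣ}

theorem affineRep_tuWord (p : FreeGroup (Fin l ⊕ Fin k)) :
    affineRep r χ (tuWord r p) = SemidirectProduct.inr (χ p)⁻¹ := by
  have h : (affineRep r χ).comp (tuWord r) =
      (SemidirectProduct.inr.comp invMonoidHom).comp χ :=
    FreeGroup.ext_hom _ _ fun y => by simp [affineRep, tuWord]
  exact DFunLike.congr_fun h p

theorem affineRep_conjGen (i : Fin r) (p : FreeGroup (Fin l ⊕ Fin k)) :
    affineRep r χ (conjGen i p) =
      SemidirectProduct.inl (Multiplicative.ofAdd (Pi.single i (χ p : S))) := by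
  have hsmul : unitsMulAut r S (χ p) (Multiplicative.ofAdd (Pi.single i 1)) =
      Multiplicative.ofAdd (Pi.single i (χ p : S)) := by
    change Multiplicative.ofAdd (χ p • (Pi.single i 1 : Fin r → S)) = _
    rw [← Pi.single_smul, Units.smul_def, smul_eq_mul, mul_one]
  rw [← hsmul, SemidirectProduct.inl_aut]
  have hga : affineRep r χ (ga r l k i) =
      SemidirectProduct.inl (Multiplicative.ofAdd (Pi.single i 1)) := by simp [affineRep, ga]
  simp [conjGen, affineRep_tuWord, hga]

theorem affineRep_eq_one_of_mem_normalClosure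
    (hpow : ∀ y, χ (FreeGroup.of y) ^ letterOrder k m y = 1)
    (hu : ∀ j, (χ (FreeGroup.of (Sum.inr j)) : S) =
      ∑ s : Fin (d j + 1), (c j s : S) * χ (tLetter hkl j ^ (s : ℕ)))
    {w : FreeGroup (Fin r ⊕ Fin l ⊕ Fin k)} (hw : w ∈ Subgroup.normalClosure ℛ) :
    affineRep r χ w = 1 := by
  have hof (y : Fin l ⊕ Fin k) : affineRep r χ (FreeGroup.of (Sum.inr y)) =
      SemidirectProduct.inr (χ (FreeGroup.of y))⁻¹ := by simp [affineRep]
  suffices h : ℛ ⊆ (affineRep r χ).ker from Subgroup.normalClosure_le_normal h hw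
  refine fun v hv => of_mem_WFRel (P := fun v => affineRep r χ v = 1) (fun y => ?_)
    (fun y y' => ?_) (fun i i' p q => ?_) (fun i j => ?_) hv
  · rw [map_pow, hof, ← map_pow, inv_pow, hpow, inv_one, map_one]
  · rw [map_pcomm, hof, hof]
    exact pcomm_eq_one_of_commute ((Commute.all _ _).map _)
  · rw [map_pcomm, affineRep_conjGen, affineRep_conjGen]
    exact pcomm_eq_one_of_commute ((Commute.all _ _).map _)
  · let τ : Multiplicative S →* Multiplicative (Fin r → S) ⋊[unitsMulAut r S] Sˣ :=
      SemidirectProduct.inl.comp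
        (AddMonoidHom.toMultiplicative (AddMonoidHom.single (fun _ => S) i))
    have hτ : (affineRep r χ).comp
        (FreeGroup.lift fun s : Fin (d j + 1) => conjGen i (tLetter hkl j ^ (s : ℕ))) =
        τ.comp (FreeGroup.lift fun s : Fin (d j + 1) =>
          Multiplicative.ofAdd (χ (tLetter hkl j ^ (s : ℕ)) : S)) :=
      FreeGroup.ext_hom _ _ fun s => by simp [affineRep_conjGen, τ]
    have hsum : Multiplicative.ofAdd (χ (FreeGroup.of (Sum.inr j)) : S) =
        FreeGroup.lift (fun s : Fin (d j + 1) =>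
          Multiplicative.ofAdd (χ (tLetter hkl j ^ (s : ℕ)) : S))
          (powProd (List.finRange (d j + 1)) fun s => c j s) := by
      rw [lift_powProd_finRange, hu, ofAdd_sum]
      simp [← ofAdd_zsmul]
    rw [map_mul, map_inv, inv_mul_eq_one, affineRep_conjGen]
    exact (congrArg τ hsum).trans (DFunLike.congr_fun hτ _).symm

end AffineRepresentation

section Weights

/-- The abelian group generated by the letters `t_1, …, t_l` of `W_F`. -/
abbrev TExponents (k : ℕ) {l : ℕ} (m : Fin l → ℕ) : Type :=
  ∀ s : Fin l, ZMod (letterOrder k m (Sum.inl s))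

/-- The image of a word in the abelian group generated by the letters `t`, the letters `u` being
sent to `1`. -/
noncomputable def tExponent (m : Fin l → ℕ) :
    FreeGroup (Fin l ⊕ Fin k) →* Multiplicative (TExponents k m) :=
  MonoidHom.mk' (fun p => Multiplicative.ofAdd fun s => (expSum p (Sum.inl s) : ZMod _))
    fun p q => by
      simp only [expSum_mul, Int.cast_add]
      rfl

theorem tExponent_eq_one {p : FreeGroup (Fin l ⊕ Fin k)}
    (hp : ∀ s, (letterOrder k m (Sum.inl s) : ℤ) ∣ expSum p (Sum.inl s)) : tExponent m p = 1 :=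
  congrArg Multiplicative.ofAdd (funext fun s => (ZMod.intCast_zmod_eq_zero_iff_dvd _ _).2 (hp s))

theorem letterOrder_dvd_expSum_sub {p q : FreeGroup (Fin l ⊕ Fin k)}
    (hpq : tExponent m p = tExponent m q) (hp : ∀ j, expSum p (Sum.inr j) = 0)
    (hq : ∀ j, expSum q (Sum.inr j) = 0) (y : Fin l ⊕ Fin k) :
    (letterOrder k m y : ℤ) ∣ expSum p y - expSum q y := by
  rcases y with s | j
  · exact (ZMod.intCast_eq_intCast_iff_dvd_sub _ _ _).1 (congrFun hpq s).symm
  · simp [hp, hq]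

variable (K : Type*) [CommRing K] [Algebra (AddMonoidAlgebra ℤ (TExponents k m)) K]
  [IsFractionRing (AddMonoidAlgebra ℤ (TExponents k m)) K]

theorem isUnit_sum_monomialUnit_tLetter (hkl : k ≤ l) {n : ℕ} {e : ℕ → ℤ} (he : e n = 1)
    (j : Fin k) : IsUnit (∑ s : Fin (n + 1), (e s : K) *
      (monomialUnit K (tExponent m (tLetter hkl j ^ (s : ℕ))) : Kˣ)) := by
  have hj : letterOrder k m (Sum.inl (Fin.castLE hkl j)) = 0 := by simp [letterOrder]
  let π : TExponents k m →+ ℤ :=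
    (ZMod.castHom (zero_dvd_iff.2 hj) ℤ).toAddMonoidHom.comp (Pi.evalAddMonoidHom _ _)
  have hπ : π (tExponent m (tLetter hkl j)).toAdd = 1 := by
    change ZMod.castHom (zero_dvd_iff.2 hj) ℤ (expSum (tLetter hkl j) _ : ZMod _) = 1
    rw [map_intCast, expSum_tLetter_inl, if_pos rfl, Int.cast_one]
  have h := isUnit_sum_monomialUnit_pow K π (hπ ▸ one_pos) he
  rw [ofAdd_toAdd] at h
  simpa only [map_pow] using h

theorem exists_weight (hkl : k ≤ l) (hcd : ∀ j, c j (d j) = 1) :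
    ∃ χ : FreeGroup (Fin l ⊕ Fin k) →* Kˣ,
      (∀ p, (∀ j, expSum p (Sum.inr j) = 0) → χ p = monomialUnit K (tExponent m p)) ∧
      (∀ y, χ (FreeGroup.of y) ^ letterOrder k m y = 1) ∧
      ∀ j, (χ (FreeGroup.of (Sum.inr j)) : K) = ∑ s : Fin (d j + 1),
        (c j s : K) * χ (tLetter hkl j ^ (s : ℕ)) := by
  choose f hf using fun j => isUnit_sum_monomialUnit_tLetter (m := m) K hkl (hcd j) j
  let χ : FreeGroup (Fin l ⊕ Fin k) →* Kˣ := MonoidHom.mk'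
    (fun p => monomialUnit K (tExponent m p) * ∏ j, f j ^ expSum p (Sum.inr j)) fun p q => by
      simp only [map_mul, expSum_mul, zpow_add, Finset.prod_mul_distrib]
      exact mul_mul_mul_comm _ _ _ _
  have hχ (p : FreeGroup (Fin l ⊕ Fin k)) (hp : ∀ j, expSum p (Sum.inr j) = 0) :
      χ p = monomialUnit K (tExponent m p) := by simp [χ, hp]
  refine ⟨χ, hχ, ?_, fun j => ?_⟩
  · rintro (s | j)
    · rw [← map_pow, hχ _ (by simp [expSum_of]), tExponent_eq_one, map_one]
      intro s'
      by_cases h : s = s'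
      · simp [h]
      · simp [expSum_of, h]
    · rw [letterOrder, Sum.elim_inr, pow_zero]
  · have ht : tExponent m (FreeGroup.of (Sum.inr j)) = 1 :=
      tExponent_eq_one fun s => by simp [expSum_of]
    have hu : χ (FreeGroup.of (Sum.inr j)) = f j := by simp [χ, ht, expSum_of]
    rw [hu, hf]
    exact Finset.sum_congr rfl fun s _ => by rw [hχ _ fun j' => by simp]

theorem linearIndependent_single_monomialUnit (r : ℕ) :
    LinearIndependent ℤ fun q : Fin r × Multiplicative (TExponents k m) =>
      (Pi.single q.1 (monomialUnit K q.2 : K) : Fin r → K) :=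
  (Pi.linearIndependent_single (fun (_ : Fin r) (t : Multiplicative (TExponents k m)) =>
    (monomialUnit K t : K)) fun _ =>
      linearIndependent_monomialUnit (T := TExponents k m) K).comp _
    (Equiv.sigmaEquivProd _ _).symm.injective

end Weights

theorem expSum_map_eq_zero_of_balancedProd_mem (hcd : ∀ j, c j (d j) = 1) {X : ℕ}
    {W : FreeGroup (Fin r × BalancedWord l k X)}
    (hW : balancedProd W ∈ Subgroup.normalClosure ℛ)
    (q : Fin r × Multiplicative (TExponents k m)) :
    expSum (FreeGroup.map (fun z => (z.1, tExponent m z.2)) W) q = 0 := by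
  let K := FractionRing (AddMonoidAlgebra ℤ (TExponents k m))
  obtain ⟨χ, hχ, hpow, hu⟩ := exists_weight (m := m) K hkl hcd
  let v : FreeGroup (Fin r × Multiplicative (TExponents k m)) →* Multiplicative (Fin r → K) :=
    FreeGroup.lift fun q => Multiplicative.ofAdd (Pi.single q.1 (monomialUnit K q.2 : K))
  have hrep : (affineRep r χ).comp balancedProd = (SemidirectProduct.inl.comp v).comp
      (FreeGroup.map fun z : Fin r × BalancedWord l k X => (z.1, tExponent m z.2)) :=
    FreeGroup.ext_hom _ _ fun z => by simp [balancedProd, affineRep_conjGen, hχ _ z.2.2.2, v]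
  have hone := (DFunLike.congr_fun hrep W).symm.trans
    (affineRep_eq_one_of_mem_normalClosure hpow hu hW)
  exact expSum_eq_zero_of_lift_eq_one (linearIndependent_single_monomialUnit K r)
    (SemidirectProduct.inl_injective (hone.trans (map_one _).symm)) q

theorem exists_areaLe_balancedProd (hm : ∀ s : Fin l, k ≤ (s : ℕ) → 1 ≤ m s)
    (hd : ∀ j, 1 ≤ d j) (hc0 : ∀ j, c j 0 = 1) (hcd : ∀ j, c j (d j) = 1) :
    ∃ A : ℕ → ℕ, ExpBounded A ∧ ∀ (X : ℕ) (W : FreeGroup (Fin r × BalancedWord l k X)),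
      balancedProd W ∈ Subgroup.normalClosure ℛ →
        AreaLe ℛ (balancedProd W) (freeNorm W ^ 2 * A X) := by
  obtain ⟨A, hA, hcomm⟩ :=
    exists_expBounded_approxCommute_conjGen (r := r) (hkl := hkl) hm hd hc0 hcd
  refine ⟨fun X => A X + 2 * ((l + k + 2) ^ 2 * (2 * X + 0) ^ 2), ?_, fun X W hW => ?_⟩
  · exact hA.add ((ExpBounded.const 2).mul
      ((ExpBounded.const _).mul ((ExpBounded.id.comp_affine 2 0).pow 2)))
  · refine areaLe_lift_of_expSum_map_eq_zero _ (fun z z' => ?_) (fun z z' hzz' => ?_) W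
      (expSum_map_eq_zero_of_balancedProd_mem hcd hW)
    · exact (hcomm X z.1 z'.1 z.2 z'.2 z.2.2.1 z'.2.2.1 z.2.2.2 z'.2.2.2).mono
        (Nat.le_add_right _ _)
    · obtain ⟨hi, ht⟩ := Prod.mk.inj hzz'
      have happrox := approxEq_tuWord (r := r) (hkl := hkl) (d := d) (c := c) (n := 2 * X + 0)
        (by have := z.2.2.1; have := z'.2.2.1; omega)
        (letterOrder_dvd_expSum_sub ht z.2.2.2 z'.2.2.2)
      rw [hi]
      exact (approxEq_conjGen happrox z'.1).mono (Nat.le_add_left _ _)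

theorem exists_expBounded_areaLe (hm : ∀ s : Fin l, k ≤ (s : ℕ) → 1 ≤ m s)
    (hd : ∀ j, 1 ≤ d j) (hc0 : ∀ j, c j 0 = 1) (hcd : ∀ j, c j (d j) = 1) :
    ∃ A : ℕ → ℕ, ExpBounded A ∧ ∀ n, ∀ w ∈ Subgroup.normalClosure ℛ, freeNorm w ≤ n →
      AreaLe ℛ w (A n) := by
  obtain ⟨a, B, hB, hform⟩ := exists_expBounded_hasBalancedForm r hkl m d c
  obtain ⟨A, hA, harea⟩ := exists_areaLe_balancedProd (r := r) (hkl := hkl) hm hd hc0 hcd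
  refine ⟨fun n => B n + B n ^ 2 * A (a * n + 0) + (l + k + 2) ^ 2 * n ^ 2, ?_,
    fun n w hw hwn => ?_⟩
  · exact (hB.add ((hB.pow 2).mul (hA.comp_affine a 0))).add
      ((ExpBounded.const _).mul (ExpBounded.id.pow 2))
  · obtain ⟨q, hq⟩ := hform n
    obtain ⟨W, hWn, hW⟩ := hq w hwn
    have htu : AreaLe ℛ (tuWord r (tuPart w)) ((l + k + 2) ^ 2 * n ^ 2) :=
      areaLe_tuWord ((freeNorm_tuPart_le w).trans hwn) fun y => by
        rw [expSum_tuPart]; exact letterOrder_dvd_expSum hw y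
    have hw' : w * (tuWord r (tuPart w))⁻¹ ∈ Subgroup.normalClosure ℛ :=
      mul_mem hw (inv_mem htu.mem_normalClosure)
    have hbal : balancedProd W ∈ Subgroup.normalClosure ℛ := by
      have hconj := Subgroup.normalClosure_normal.conj_mem _ hw' (tuWord r q)⁻¹
      rw [inv_inv] at hconj
      simpa only [inv_mul_cancel_right] using mul_mem hW.symm.mem_normalClosure hconj
    have hconj := (hW.areaLe (harea _ W hbal)).conj (tuWord r q)⁻¹
    have hprod := hconj.mul htu
    simp only [inv_inv, mul_assoc, mul_inv_cancel_left, inv_mul_cancel, mul_one,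
      mul_inv_cancel] at hprod
    exact hprod.mono (Nat.add_le_add_right (Nat.add_le_add_left
      (Nat.mul_le_mul_right _ (Nat.pow_le_pow_left hWn 2)) _) _)

end WF

/-! ### Upper triangular matrices -/

/-- The group of invertible upper triangular matrices `[[1, b, z], [0, p, c], [0, 0, q]]`. -/
@[ext]
structure UpperTriangular (S : Type*) [CommRing S] where
  p : Sˣ
  q : Sˣ
  b : S
  c : S
  z : S

namespace UpperTriangular

variable {S : Type*} [CommRing S]

instance : Mul (UpperTriangular S) :=
  ⟨fun g h => ⟨g.p * h.p, g.q * h.q, h.b + g.b * h.p, g.p * h.c + g.c * h.q,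
    h.z + g.b * h.c + g.z * h.q⟩⟩

instance : One (UpperTriangular S) := ⟨⟨1, 1, 0, 0, 0⟩⟩

instance : Inv (UpperTriangular S) :=
  ⟨fun g => ⟨g.p⁻¹, g.q⁻¹, -g.b * (g.p⁻¹ : Sˣ), -g.c * (g.p⁻¹ : Sˣ) * (g.q⁻¹ : Sˣ),
    (g.b * g.c * (g.p⁻¹ : Sˣ) - g.z) * (g.q⁻¹ : Sˣ)⟩⟩

theorem mul_def (g h : UpperTriangular S) : g * h = ⟨g.p * h.p, g.q * h.q, h.b + g.b * h.p,
    g.p * h.c + g.c * h.q, h.z + g.b * h.c + g.z * h.q⟩ := rfl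

theorem one_def : (1 : UpperTriangular S) = ⟨1, 1, 0, 0, 0⟩ := rfl

theorem inv_def (g : UpperTriangular S) : g⁻¹ = ⟨g.p⁻¹, g.q⁻¹, -g.b * (g.p⁻¹ : Sˣ),
    -g.c * (g.p⁻¹ : Sˣ) * (g.q⁻¹ : Sˣ), (g.b * g.c * (g.p⁻¹ : Sˣ) - g.z) * (g.q⁻¹ : Sˣ)⟩ := rfl

instance : Group (UpperTriangular S) :=
  Group.ofLeftAxioms (fun g h i => by ext <;> simp [mul_def] <;> ring)
    (fun g => by ext <;> simp [mul_def, one_def])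
    fun g => by
      ext
      · simp [mul_def, inv_def, one_def]
      · simp [mul_def, inv_def, one_def]
      · simp [mul_def, inv_def, one_def]
      · simp [mul_def, inv_def, one_def, mul_comm g.c]
      · simp only [mul_def, inv_def, one_def, Units.inv_mul_cancel_right]
        ring

/-- The unipotent matrix with superdiagonal `v` and corner entry `z`. -/
def unipotent (v : S × S) (z : S) : UpperTriangular S := ⟨1, 1, v.1, v.2, z⟩

/-- The matrix `diag (1, p, p q)` for `x = (p, q)`; conjugation by it multiplies superdiagonals
by `x`. -/
def diagonal : (S × S)ˣ →* UpperTriangular S :=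
  MonoidHom.mk' (fun x => ⟨Units.map (MonoidHom.fst S S) x,
    Units.map (MonoidHom.fst S S) x * Units.map (MonoidHom.snd S S) x, 0, 0, 0⟩) fun x y => by
    ext <;> simp [mul_def, mul_mul_mul_comm]

theorem unipotent_mul (v w : S × S) (y z : S) :
    unipotent v y * unipotent w z = unipotent (v + w) (y + z + v.1 * w.2) := by
  ext <;> simp [mul_def, unipotent] <;> ring

theorem unipotent_zero : unipotent (0 : S × S) 0 = 1 := rfl

theorem unipotent_inv (v : S × S) (z : S) :
    (unipotent v z)⁻¹ = unipotent (-v) (v.1 * v.2 - z) := by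
  ext <;> simp [inv_def, unipotent]

theorem pcomm_unipotent (v w : S × S) (y z : S) :
    pcomm (unipotent v y) (unipotent w z) = unipotent 0 (v.1 * w.2 - w.1 * v.2) := by
  rw [pcomm, unipotent_inv, unipotent_inv, unipotent_mul, unipotent_mul, unipotent_mul]
  ext <;> simp [unipotent]
  ring

theorem conj_unipotent_zero (g : UpperTriangular S) (z : S) :
    g⁻¹ * unipotent 0 z * g = unipotent 0 (z * g.q) := by
  rw [mul_assoc, inv_mul_eq_iff_eq_mul]
  ext <;> simp [mul_def, unipotent, add_comm]

theorem conj_unipotent_diagonal (v : S × S) (z : S) (x : (S × S)ˣ) :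
    (diagonal x)⁻¹ * unipotent v z * diagonal x =
      unipotent (v * x.val) (z * (x.val.1 * x.val.2)) := by
  rw [mul_assoc, inv_mul_eq_iff_eq_mul]
  ext <;> simp [mul_def, unipotent, diagonal]
  ring

/-- `g` is unipotent with superdiagonal `v`. -/
def HasSuperdiagonal (g : UpperTriangular S) (v : S × S) : Prop := ∃ z, g = unipotent v z

namespace HasSuperdiagonal

variable {g h : UpperTriangular S} {v w : S × S}

theorem one : HasSuperdiagonal (1 : UpperTriangular S) 0 := ⟨0, unipotent_zero.symm⟩

theorem mul (hg : HasSuperdiagonal g v) (hh : HasSuperdiagonal h w) :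
    HasSuperdiagonal (g * h) (v + w) := by
  obtain ⟨y, rfl⟩ := hg
  obtain ⟨z, rfl⟩ := hh
  exact ⟨_, unipotent_mul _ _ _ _⟩

theorem inv (hg : HasSuperdiagonal g v) : HasSuperdiagonal g⁻¹ (-v) := by
  obtain ⟨y, rfl⟩ := hg
  exact ⟨_, unipotent_inv _ _⟩

theorem pcomm_eq (hg : HasSuperdiagonal g v) (hh : HasSuperdiagonal h w) :
    pcomm g h = unipotent 0 (v.1 * w.2 - w.1 * v.2) := by
  obtain ⟨y, rfl⟩ := hg
  obtain ⟨z, rfl⟩ := hh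
  exact pcomm_unipotent _ _ _ _

theorem lift {ι : Type*} {g : ι → UpperTriangular S} {v : ι → S × S}
    (h : ∀ i, HasSuperdiagonal (g i) (v i)) (w : FreeGroup ι) :
    HasSuperdiagonal (FreeGroup.lift g w)
      (FreeGroup.lift (fun i => Multiplicative.ofAdd (v i)) w).toAdd := by
  induction w using FreeGroup.induction_on with
  | C1 => simpa using one
  | of i => simpa using h i
  | inv_of i ih => simpa using ih.inv
  | mul w w' hw hw' => simpa using hw.mul hw'

end HasSuperdiagonal

end UpperTriangular

section Corner

open UpperTriangular

variable {G 𝕜 : Type*} [Group G] [NormedField 𝕜] {R : Set G} {ψ : G →* UpperTriangular 𝕜} {C : ℝ}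

theorem exists_norm_le_of_mem_relatorConjugates (hq : ∀ g, ‖((ψ g).q : 𝕜)‖ = 1)
    (hR : ∀ w ∈ R, ∃ z, ψ w = unipotent 0 z ∧ ‖z‖ ≤ C) {w : G} (hw : w ∈ relatorConjugates R) :
    ∃ z, ψ w = unipotent 0 z ∧ ‖z‖ ≤ C := by
  obtain ⟨v, f, hv, rfl⟩ := hw
  obtain ⟨z, hz, hzC⟩ : ∃ z, ψ v = unipotent 0 z ∧ ‖z‖ ≤ C := by
    refine hv.elim (hR v) fun hv => ?_
    obtain ⟨z, hz, hzC⟩ := hR _ hv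
    refine ⟨-z, ?_, by rwa [norm_neg]⟩
    rw [← inv_inv v, map_inv, hz, unipotent_inv]
    simp
  refine ⟨z * (ψ f).q, ?_, by rwa [norm_mul, hq, mul_one]⟩
  rw [map_mul, map_mul, map_inv, hz, conj_unipotent_zero]

theorem AreaLe.exists_norm_le (hC : 0 ≤ C) (hq : ∀ g, ‖((ψ g).q : 𝕜)‖ = 1)
    (hR : ∀ w ∈ R, ∃ z, ψ w = unipotent 0 z ∧ ‖z‖ ≤ C) {w : G} {N : ℕ} (hw : AreaLe R w N) :
    ∃ z, ψ w = unipotent 0 z ∧ ‖z‖ ≤ N * C := by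
  obtain ⟨L, hL, hmem, rfl⟩ := areaLe_iff_exists_list.1 hw
  suffices h : ∃ z, ψ L.prod = unipotent 0 z ∧ ‖z‖ ≤ L.length * C by
    obtain ⟨z, hz, hzL⟩ := h
    exact ⟨z, hz, hzL.trans (by gcongr)⟩
  clear hL hw
  induction L with
  | nil => exact ⟨0, by simp [unipotent_zero], by simp⟩
  | cons v L ih =>
    rw [List.forall_mem_cons] at hmem
    obtain ⟨y, hy, hyC⟩ := exists_norm_le_of_mem_relatorConjugates hq hR hmem.1
    obtain ⟨z, hz, hzL⟩ := ih hmem.2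
    refine ⟨y + z, by simp [hy, hz, unipotent_mul], (norm_add_le _ _).trans ?_⟩
    rw [List.length_cons, Nat.cast_succ, add_one_mul, add_comm]
    gcongr

end Corner

/-! ### Points of the unit circle -/

section CircleValues

open Polynomial

theorem sum_eval_mul_pow_of_isPrimitiveRoot {R : Type*} [CommRing R] [IsDomain R] {f : R[X]}
    (hf : f.natDegree ≠ 0) {ζ : R} (hζ : IsPrimitiveRoot ζ f.natDegree) (x : R) :
    ∑ i ∈ Finset.range f.natDegree, f.eval (x * ζ ^ i) =
      f.natDegree * (f.coeff 0 + f.leadingCoeff * x ^ f.natDegree) := by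
  have hsum (s : ℕ) (hs : s < f.natDegree) (hs0 : s ≠ 0) :
      ∑ i ∈ Finset.range f.natDegree, f.coeff s * (x * ζ ^ i) ^ s = 0 := by
    have hgeom : (∑ i ∈ Finset.range f.natDegree, (ζ ^ s) ^ i) * (ζ ^ s - 1) = 0 := by
      rw [geom_sum_mul, ← pow_mul, mul_comm, pow_mul, hζ.pow_eq_one, one_pow, sub_self]
    have hne : ζ ^ s - 1 ≠ 0 := sub_ne_zero.2 (hζ.pow_ne_one_of_pos_of_lt hs0 hs)
    calc ∑ i ∈ Finset.range f.natDegree, f.coeff s * (x * ζ ^ i) ^ s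
        = f.coeff s * x ^ s * ∑ i ∈ Finset.range f.natDegree, (ζ ^ s) ^ i := by
          rw [Finset.mul_sum]
          exact Finset.sum_congr rfl fun i _ => by ring
      _ = 0 := by rw [(mul_eq_zero.1 hgeom).resolve_right hne, mul_zero]
  have hlead (i : ℕ) : (x * ζ ^ i) ^ f.natDegree = x ^ f.natDegree := by
    rw [mul_pow, pow_right_comm, hζ.pow_eq_one, one_pow, mul_one]
  obtain ⟨n, hn⟩ := Nat.exists_eq_succ_of_ne_zero hf
  simp only [eval_eq_sum_range]
  rw [Finset.sum_comm, Finset.sum_range_succ, hn, Finset.sum_range_succ', ← hn,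
    Finset.sum_eq_zero fun s hs => hsum _ (by have := Finset.mem_range.1 hs; omega) s.succ_ne_zero]
  simp only [hlead, pow_zero, mul_one, zero_add, Finset.sum_const, Finset.card_range,
    nsmul_eq_mul, coeff_natDegree, mul_add]

theorem exists_le_norm_eval_of_norm_eq {f : ℂ[X]} (hf : f.natDegree ≠ 0) (w : ℂ) :
    ∃ x : ℂ, ‖x‖ = ‖w‖ ∧ ‖f.coeff 0 + f.leadingCoeff * w ^ f.natDegree‖ ≤ ‖f.eval x‖ := by
  have hζ := Complex.isPrimitiveRoot_exp f.natDegree hf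
  by_contra! hlt
  have hnorm (i : ℕ) : ‖w * Complex.exp (2 * Real.pi * Complex.I / f.natDegree) ^ i‖ = ‖w‖ := by
    rw [norm_mul, norm_pow, Complex.norm_eq_one_of_pow_eq_one hζ.pow_eq_one hf, one_pow, mul_one]
  have hsum := (norm_sum_le _ _).trans_lt (Finset.sum_lt_sum_of_nonempty
    (Finset.nonempty_range_iff.2 hf) fun i _ => hlt _ (hnorm i))
  rw [sum_eval_mul_pow_of_isPrimitiveRoot hf hζ, norm_mul, Complex.norm_natCast] at hsum
  simp at hsum

theorem exists_one_lt_norm_eval_of_norm_eq {f : ℂ[X]} (hf : f.natDegree ≠ 0) (hmonic : f.Monic)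
    (h0 : f.coeff 0 = 1) {ρ : ℝ} (hρ : 0 < ρ) : ∃ x : ℂ, ‖x‖ = ρ ∧ 1 < ‖f.eval x‖ := by
  obtain ⟨x, hx, hle⟩ := exists_le_norm_eval_of_norm_eq hf (ρ : ℂ)
  refine ⟨x, by simpa [abs_of_pos hρ] using hx, lt_of_lt_of_le ?_ hle⟩
  have hval : f.coeff 0 + f.leadingCoeff * (ρ : ℂ) ^ f.natDegree =
      ((1 + ρ ^ f.natDegree : ℝ) : ℂ) := by simp [h0, hmonic.leadingCoeff]
  rw [hval, Complex.norm_real, Real.norm_of_nonneg (by positivity)]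
  exact lt_add_of_pos_right 1 (pow_pos hρ _)

theorem exists_norm_mul_norm_eq_one_of_monic {f : ℂ[X]} (hf : f.natDegree ≠ 0)
    (hmonic : f.Monic) (h0 : f.coeff 0 = 1) :
    ∃ x y : ℂ, ‖x‖ * ‖y‖ = 1 ∧ ‖f.eval x‖ * ‖f.eval y‖ = 1 ∧ 1 < ‖f.eval x‖ := by
  obtain ⟨z, hz⟩ := Complex.exists_root (f := f) (natDegree_pos_iff_degree_pos.1
    (Nat.pos_of_ne_zero hf))
  have hz0 : 0 < ‖z‖ := by
    rw [norm_pos_iff]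
    rintro rfl
    rw [IsRoot, ← coeff_zero_eq_eval_zero, h0] at hz
    exact one_ne_zero hz
  obtain ⟨x, hx, hfx⟩ := exists_one_lt_norm_eval_of_norm_eq hf hmonic h0 (inv_pos.2 hz0)
  obtain ⟨w, hw, hfw⟩ := exists_one_lt_norm_eval_of_norm_eq hf hmonic h0 hz0
  have hconn : IsPreconnected (Metric.sphere (0 : ℂ) ‖z‖) :=
    isPreconnected_sphere (by rw [Complex.rank_real_complex]; exact Nat.one_lt_ofNat) _ _
  have hmem : ‖f.eval x‖⁻¹ ∈ Set.Icc ‖f.eval z‖ ‖f.eval w‖ :=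
    ⟨by rw [hz.eq_zero, norm_zero]; positivity, (inv_le_one_of_one_le₀ hfx.le).trans hfw.le⟩
  obtain ⟨y, hy, hfy⟩ := hconn.intermediate_value (mem_sphere_zero_iff_norm.2 rfl)
    (mem_sphere_zero_iff_norm.2 hw) (f := fun y => ‖f.eval y‖) f.continuous.norm.continuousOn hmem
  have hfy' : ‖f.eval y‖ = ‖f.eval x‖⁻¹ := hfy
  refine ⟨x, y, ?_, ?_, hfx⟩
  · rw [hx, mem_sphere_zero_iff_norm.1 hy, inv_mul_cancel₀ hz0.ne']
  · rw [hfy', mul_inv_cancel₀ (zero_lt_one.trans hfx).ne']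

theorem exists_units_norm_mul_norm_eq_one {n : ℕ} (hn : 1 ≤ n) {e : ℕ → ℤ} (he0 : e 0 = 1)
    (hen : e n = 1) :
    ∃ x u : (ℂ × ℂ)ˣ, (u : ℂ × ℂ) = ∑ s : Fin (n + 1), (e s : ℂ × ℂ) * (x ^ (s : ℕ) : (ℂ × ℂ)ˣ) ∧
      ‖x.val.1‖ * ‖x.val.2‖ = 1 ∧ ‖u.val.1‖ * ‖u.val.2‖ = 1 ∧ 1 < ‖u.val.1‖ := by
  let f : ℂ[X] := ∑ s : Fin (n + 1), C (e s : ℂ) * X ^ (s : ℕ)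
  have hcoeff (s : Fin (n + 1)) : f.coeff s = e s := by
    simp [f, coeff_X_pow, Fin.val_inj]
  have hfn : f.coeff n = 1 := by simpa [hen] using hcoeff (Fin.last n)
  have hdeg : f.natDegree = n := natDegree_eq_of_le_of_coeff_ne_zero
    (natDegree_sum_le_of_forall_le _ _ fun s _ =>
      (natDegree_C_mul_X_pow_le _ _).trans s.is_le) (hfn ▸ one_ne_zero)
  have heval (x : ℂ) : f.eval x = ∑ s : Fin (n + 1), (e s : ℂ) * x ^ (s : ℕ) := by
    simp [f, eval_finsetSum]
  obtain ⟨x, y, hxy, huv, hu⟩ := exists_norm_mul_norm_eq_one_of_monic (f := f)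
    (by omega) (by rw [Monic, leadingCoeff, hdeg, hfn]) (by simpa [he0] using hcoeff 0)
  have hunit {a b : ℂ} (h : ‖a‖ * ‖b‖ = 1) : IsUnit (a, b) := by
    simpa [Prod.isUnit_iff] using mul_ne_zero_iff.1 (h.trans_ne one_ne_zero)
  obtain ⟨X, hX⟩ := hunit hxy
  obtain ⟨U, hU⟩ := hunit huv
  refine ⟨X, U, ?_, by rwa [hX], by rwa [hU], by rwa [hU]⟩
  ext <;> simp [hX, hU, heval, Prod.fst_sum, Prod.snd_sum]

end CircleValues

/-! ### Central representations and the lower bound -/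

namespace WF

variable {r l k : ℕ} {hkl : k ≤ l} {m : Fin l → ℕ} {d : Fin k → ℕ} {c : Fin k → ℕ → ℤ}

local notation "ℛ" => WFRel r l k hkl m d c

open UpperTriangular

section CentralRepresentation

variable {S : Type*} [CommRing S] {χ : FreeGroup (Fin l ⊕ Fin k) →* (S × S)ˣ}

/-- The representation by upper triangular matrices in which the `a_i` are unipotent with
superdiagonal `(1, 1)` and the letters `t`, `u` are diagonal. The relators of `W_F` act by
central matrices, whose corner entries measure the area. -/
def triangularRep (r : ℕ) (χ : FreeGroup (Fin l ⊕ Fin k) →* (S × S)ˣ) :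
    FreeGroup (Fin r ⊕ Fin l ⊕ Fin k) →* UpperTriangular S :=
  FreeGroup.lift (Sum.elim (fun _ => unipotent 1 0) fun y => diagonal (χ (FreeGroup.of y)))

theorem triangularRep_tuWord (p : FreeGroup (Fin l ⊕ Fin k)) :
    triangularRep r χ (tuWord r p) = diagonal (χ p) := by
  have h : (triangularRep r χ).comp (tuWord r) = diagonal.comp χ :=
    FreeGroup.ext_hom _ _ fun y => by simp [triangularRep, tuWord]
  exact DFunLike.congr_fun h p

theorem hasSuperdiagonal_conjGen (i : Fin r) (p : FreeGroup (Fin l ⊕ Fin k)) :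
    HasSuperdiagonal (triangularRep r χ (conjGen i p)) (χ p) := by
  have hga : triangularRep r χ (ga r l k i) = unipotent 1 0 := by simp [triangularRep, ga]
  rw [conjGen, map_mul, map_mul, map_inv, hga, triangularRep_tuWord, conj_unipotent_diagonal]
  exact ⟨_, by rw [one_mul]⟩

theorem hasSuperdiagonal_zero_of_mem_WFRel
    (hpow : ∀ y, χ (FreeGroup.of y) ^ letterOrder k m y = 1)
    (hu : ∀ j, (χ (FreeGroup.of (Sum.inr j)) : S × S) =
      ∑ s : Fin (d j + 1), (c j s : S × S) * χ (tLetter hkl j ^ (s : ℕ)))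
    {w : FreeGroup (Fin r ⊕ Fin l ⊕ Fin k)} (hw : w ∈ ℛ) :
    HasSuperdiagonal (triangularRep r χ w) 0 := by
  have hof (y : Fin l ⊕ Fin k) : triangularRep r χ (FreeGroup.of (Sum.inr y)) =
      diagonal (χ (FreeGroup.of y)) := by simp [triangularRep]
  refine of_mem_WFRel (P := fun w => HasSuperdiagonal (triangularRep r χ w) 0)
    (fun y => ?_) (fun y y' => ?_) (fun i i' p q => ?_) (fun i j => ?_) hw
  · rw [map_pow, hof, ← map_pow, hpow, map_one]
    exact .one
  · rw [map_pcomm, hof, hof, pcomm_eq_one_of_commute ((Commute.all _ _).map _)]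
    exact .one
  · rw [map_pcomm, (hasSuperdiagonal_conjGen i p).pcomm_eq (hasSuperdiagonal_conjGen i' q)]
    exact ⟨_, rfl⟩
  · have hlift := HasSuperdiagonal.lift (fun s : Fin (d j + 1) =>
      hasSuperdiagonal_conjGen (χ := χ) i (tLetter hkl j ^ (s : ℕ)))
      (powProd (List.finRange (d j + 1)) fun s => c j s)
    have hcomp : (triangularRep r χ).comp
        (FreeGroup.lift fun s : Fin (d j + 1) => conjGen i (tLetter hkl j ^ (s : ℕ))) =
        FreeGroup.lift fun s : Fin (d j + 1) =>
          triangularRep r χ (conjGen i (tLetter hkl j ^ (s : ℕ))) :=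
      FreeGroup.ext_hom _ _ fun s => by simp
    have h := (hasSuperdiagonal_conjGen (χ := χ) i (FreeGroup.of (Sum.inr j))).inv.mul hlift
    rw [lift_powProd_finRange, hu, ← hcomp, MonoidHom.comp_apply, ← map_inv, ← map_mul] at h
    simpa [toAdd_prod] using h

end CentralRepresentation

theorem finite_setOf_adm : {α : Fin l → ℕ | Adm l k m d α}.Finite := by
  refine (Set.Finite.pi' (t := fun s : Fin l => Set.Iic
    (if h : (s : ℕ) < k then d ⟨s, h⟩ else m s)) fun _ => Set.finite_Iic _).subset
    fun α hα s => ?_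
  rw [Set.mem_Iic]
  split_ifs with h
  exacts [hα.1 s h, (hα.2 s (not_lt.1 h)).le]

theorem finite_WFRel : (ℛ).Finite := by
  have hadm := finite_setOf_adm (m := m) (d := d)
  have hconj := (Set.finite_univ (α := Fin r × Fin r)).prod (hadm.prod hadm)
  refine ((Set.finite_range fun s : Fin l => gt r l k s ^ m s).union <|
    (Set.finite_range fun j : Fin k × Fin k => pcomm (gu r l k j.1) (gu r l k j.2)).union <|
    (Set.finite_range fun s : Fin l × Fin l => pcomm (gt r l k s.1) (gt r l k s.2)).union <|
    (Set.finite_range fun s : Fin l × Fin k => pcomm (gt r l k s.1) (gu r l k s.2)).union <|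
    (Set.finite_range fun i : Fin r × Fin r => pcomm (ga r l k i.1) (ga r l k i.2)).union <|
    (hconj.image fun z => pcomm ((tw r l k z.2.1)⁻¹ * ga r l k z.1.1 * tw r l k z.2.1)
      ((tw r l k z.2.2)⁻¹ * ga r l k z.1.2 * tw r l k z.2.2)).union <|
    Set.finite_range fun z : Fin r × Fin k => (conjGen z.1 (FreeGroup.of (Sum.inr z.2)))⁻¹ *
      FreeGroup.lift (fun s : Fin (d z.2 + 1) => conjGen z.1 (tLetter hkl z.2 ^ (s : ℕ)))
        (powProd (List.finRange (d z.2 + 1)) fun s => c z.2 s)).subset ?_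
  refine Set.union_subset_union ?_ <| Set.union_subset_union ?_ <| Set.union_subset_union ?_ <|
    Set.union_subset_union ?_ <| Set.union_subset_union ?_ <| Set.union_subset_union ?_ ?_
  · rintro _ ⟨s, -, rfl⟩
    exact ⟨s, rfl⟩
  · rintro _ ⟨j, j', rfl⟩
    exact ⟨(j, j'), rfl⟩
  · rintro _ ⟨s, s', rfl⟩
    exact ⟨(s, s'), rfl⟩
  · rintro _ ⟨s, j, rfl⟩
    exact ⟨(s, j), rfl⟩
  · rintro _ ⟨i, i', rfl⟩
    exact ⟨(i, i'), rfl⟩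
  · rintro _ ⟨i, i', α, β, hα, hβ, rfl⟩
    exact ⟨((i, i'), α, β), ⟨⟨⟩, hα, hβ⟩, rfl⟩
  · rintro _ ⟨i, j, rfl⟩
    exact ⟨(i, j), by rw [prod_conj_zpow_eq_lift_powProd]; rfl⟩

theorem norm_q_triangularRep {𝕜 : Type*} [NormedField 𝕜]
    {χ : FreeGroup (Fin l ⊕ Fin k) →* (𝕜 × 𝕜)ˣ}
    (hχ : ∀ y, ‖(χ (FreeGroup.of y)).val.1‖ * ‖(χ (FreeGroup.of y)).val.2‖ = 1)
    (w : FreeGroup (Fin r ⊕ Fin l ⊕ Fin k)) : ‖((triangularRep r χ w).q : 𝕜)‖ = 1 := by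
  induction w using FreeGroup.induction_on with
  | C1 => simp [one_def]
  | of y =>
    rcases y with i | y
    · simp [triangularRep, unipotent]
    · simpa [triangularRep, diagonal] using hχ y
  | inv_of y ih => simp [inv_def, ih]
  | mul v w hv hw => simp [mul_def, hv, hw]

theorem exists_character (hd : ∀ j, 1 ≤ d j) (hc0 : ∀ j, c j 0 = 1) (hcd : ∀ j, c j (d j) = 1) :
    ∃ χ : FreeGroup (Fin l ⊕ Fin k) →* (ℂ × ℂ)ˣ,
      (∀ y, χ (FreeGroup.of y) ^ letterOrder k m y = 1) ∧
      (∀ j, (χ (FreeGroup.of (Sum.inr j)) : ℂ × ℂ) =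
        ∑ s : Fin (d j + 1), (c j s : ℂ × ℂ) * χ (tLetter hkl j ^ (s : ℕ))) ∧
      (∀ y, ‖(χ (FreeGroup.of y)).val.1‖ * ‖(χ (FreeGroup.of y)).val.2‖ = 1) ∧
      ∀ j, 1 < ‖(χ (FreeGroup.of (Sum.inr j))).val.1‖ := by
  choose x u hsum hx hu hlt using fun j =>
    exists_units_norm_mul_norm_eq_one (hd j) (hc0 j) (hcd j)
  refine ⟨FreeGroup.lift (Sum.elim (fun s => if h : (s : ℕ) < k then x ⟨s, h⟩ else 1) u),
    ?_, fun j => ?_, ?_, fun j => by simpa using hlt j⟩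
  · rintro (s | j)
    · by_cases h : (s : ℕ) < k <;> simp [letterOrder, h]
    · simp [letterOrder]
  · simpa [tLetter] using hsum j
  · rintro (s | j)
    · by_cases h : (s : ℕ) < k <;> simp [h, hx]
    · simpa using hu j

theorem exists_forall_areaLe_norm_le {𝕜 : Type*} [NormedField 𝕜]
    {χ : FreeGroup (Fin l ⊕ Fin k) →* (𝕜 × 𝕜)ˣ}
    (hpow : ∀ y, χ (FreeGroup.of y) ^ letterOrder k m y = 1)
    (hu : ∀ j, (χ (FreeGroup.of (Sum.inr j)) : 𝕜 × 𝕜) =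
      ∑ s : Fin (d j + 1), (c j s : 𝕜 × 𝕜) * χ (tLetter hkl j ^ (s : ℕ)))
    (hnorm : ∀ y, ‖(χ (FreeGroup.of y)).val.1‖ * ‖(χ (FreeGroup.of y)).val.2‖ = 1) :
    ∃ C : ℝ, ∀ w N, AreaLe ℛ w N →
      ∃ z, triangularRep r χ w = unipotent 0 z ∧ ‖z‖ ≤ N * C := by
  have hcorner (v) (hv : v ∈ ℛ) := hasSuperdiagonal_zero_of_mem_WFRel (r := r) hpow hu hv
  choose! z hz using hcorner
  obtain ⟨B, hB⟩ := (finite_WFRel.image fun v => ‖z v‖).bddAbove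
  exact ⟨max B 0, fun w N hw => hw.exists_norm_le (le_max_right B 0) (norm_q_triangularRep hnorm)
    fun v hv => ⟨z v, hz v hv, le_max_of_le_left (hB ⟨v, hv, rfl⟩)⟩⟩

theorem freeNorm_pcomm_conjGen_pow_le (i : Fin r) (y : Fin l ⊕ Fin k) (n : ℕ) :
    freeNorm (pcomm (conjGen i (FreeGroup.of y ^ n)) (ga r l k i)) ≤ 4 * n + 4 := by
  have hpow := freeNorm_pow_le (FreeGroup.of y) n
  have hconj := freeNorm_conjGen_le i (FreeGroup.of y ^ n)
  have hga : freeNorm (ga r l k i) = 1 := freeNorm_of _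
  have hcomm := freeNorm_pcomm_le (conjGen i (FreeGroup.of y ^ n)) (ga r l k i)
  rw [freeNorm_of, mul_one] at hpow
  omega

theorem exists_pow_le_of_areaLe (hr : 1 ≤ r) (hk : 1 ≤ k)
    (hm : ∀ s : Fin l, k ≤ (s : ℕ) → 1 ≤ m s) (hd : ∀ j, 1 ≤ d j) (hc0 : ∀ j, c j 0 = 1)
    (hcd : ∀ j, c j (d j) = 1) :
    ∃ ρ C : ℝ, 1 < ρ ∧ ∀ n, ∃ w ∈ Subgroup.normalClosure ℛ, freeNorm w ≤ 4 * n + 4 ∧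
      ∀ N : ℕ, AreaLe ℛ w N → ρ ^ n ≤ 1 + N * C := by
  obtain ⟨χ, hpow, hu, hnorm, hlt⟩ := exists_character (m := m) (hkl := hkl) hd hc0 hcd
  obtain ⟨C, hC⟩ := exists_forall_areaLe_norm_le (r := r) hpow hu hnorm
  let i : Fin r := ⟨0, hr⟩
  let y : Fin l ⊕ Fin k := Sum.inr ⟨0, hk⟩
  have hy₁ : 1 < ‖(χ (FreeGroup.of y)).val.1‖ := hlt ⟨0, hk⟩
  have hy₂ : ‖(χ (FreeGroup.of y)).val.2‖ ≤ 1 := by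
    by_contra! h
    exact (one_lt_mul_of_lt_of_le hy₁ h.le).ne' (hnorm y)
  refine ⟨_, C, hy₁, fun n => ⟨pcomm (conjGen i (FreeGroup.of y ^ n)) (ga r l k i),
    pcomm_mem_normalClosure_of_expSum_eq_zero hm hd hc0 hcd (by simp [conjGen, ga, expSum_of])
      (by simp [ga, expSum_of]), freeNorm_pcomm_conjGen_pow_le i y n, fun N hN => ?_⟩⟩
  obtain ⟨z, hz, hzN⟩ := hC _ _ hN
  rw [← conjGen_one, map_pcomm,
    (hasSuperdiagonal_conjGen _ _).pcomm_eq (hasSuperdiagonal_conjGen _ _)] at hz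
  have hz' : (χ (FreeGroup.of y)).val.1 ^ n - (χ (FreeGroup.of y)).val.2 ^ n = z := by
    simpa [unipotent] using congrArg UpperTriangular.z hz
  have hsub := norm_sub_norm_le ((χ (FreeGroup.of y)).val.1 ^ n) ((χ (FreeGroup.of y)).val.2 ^ n)
  have hpow₂ := pow_le_one₀ (n := n) (norm_nonneg _) hy₂
  rw [hz', norm_pow, norm_pow] at hsub
  linarith

end WF

namespace WF

variable (r l k : ℕ)

/-- The group `W_F` is metabelian and the Dehn function of its given
finite presentation is equivalent to `2ⁿ`. -/
theorem wf_metabelian_exponential_dehn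
    (hr : 1 ≤ r) (hk : 1 ≤ k) (hkl : k ≤ l)
    (m : Fin l → ℕ) (hm : ∀ i : Fin l, k ≤ (i : ℕ) → 1 ≤ m i)
    (d : Fin k → ℕ) (hd : ∀ i, 1 ≤ d i)
    (c : Fin k → ℕ → ℤ) (hc0 : ∀ i, c i 0 = 1) (hcd : ∀ i, c i (d i) = 1) :
    IsMetabelian (FreeGroup (Fin r ⊕ Fin l ⊕ Fin k) ⧸
      Subgroup.normalClosure (WFRel r l k hkl m d c)) ∧
    ∃ δ : ℕ → ℕ, IsDehnFunctionOf (WFRel r l k hkl m d c) δ ∧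
      DehnEquiv δ (fun n => 2 ^ n) := by
  refine ⟨isMetabelian_quotient_normalClosure hm hd hc0 hcd, ?_⟩
  obtain ⟨A, hA, hupper⟩ := exists_expBounded_areaLe (r := r) (hkl := hkl) hm hd hc0 hcd
  obtain ⟨ρ, C, hρ, hlower⟩ := exists_pow_le_of_areaLe (hkl := hkl) hr hk hm hd hc0 hcd
  obtain ⟨δ, hδ, hδA⟩ := exists_isDehnFunctionOf_le hupper
  exact ⟨δ, hδ, (hA.mono hδA).dominates, hδ.two_pow_dominates hρ hlower⟩

end WF
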